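/- arXiv:2601.22370 — 3 statements merged into one kernel-verified Lean document; each statement's English description precedes it below -/
import Mathlib

section
/- Let f : ℝⁿ → ℝ be a convex function and let t > 0, δ > 0. Assume the HJ-Prox integrals are finite. Then for every x ∈ ℝⁿ, ‖prox^δ_{tf}(x) − prox_{tf}(x)‖ ≤ √(n t δ); in particular, sup_{x ∈ ℝⁿ} ‖prox^δ_{tf}(x) − prox_{tf}(x)‖ ≤ √(n t δ). -/
/-!
Divided by `δ`, the proximal objective is a potential `φ` that is `m`-strongly convex with
`m = 1 / (t δ)`, and `prox^δ` is the mean of the Gibbs measure with density proportional to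
`exp (-φ)`. Let `p` be the minimizer of `φ`. Along the ray from `p` to `y`, strong convexity gives
`φ (p + s (y - p)) + m / 2 * (1 - s ^ 2) * ‖y - p‖ ^ 2 ≤ φ y`, so dilating the density towards `p`
multiplies it by at least `1 + m / 2 * (1 - s ^ 2) * ‖y - p‖ ^ 2`. On the other hand the dilation
multiplies its integral by exactly `s⁻ⁿ`. Comparing first-order terms as `s → 1` bounds
the second moment about `p` by `n / m`, and Jensen's inequality passes to the mean.
-/

open MeasureTheory Real

open Module (finrank)

section StrongConvexity

variable {E : Type*} [NormedAddCommGroup E] [NormedSpace ℝ E] {S : Set E} {φ : E → ℝ} {m : ℝ}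
  {p y : E}

theorem add_mul_sq_norm_sub_le_of_isMinOn (hφ : StrongConvexOn S m φ) (hp : p ∈ S)
    (hmin : IsMinOn φ S p) (hy : y ∈ S) : φ p + m / 2 * ‖y - p‖ ^ 2 ≤ φ y := by
  have hsegment : ∀ r ∈ Set.Ioo (0 : ℝ) 1, (1 - r) * (m / 2 * ‖y - p‖ ^ 2) ≤ φ y - φ p := by
    rintro r ⟨hr₀, hr₁⟩
    have hconv := hφ.2 hy hp hr₀.le (sub_nonneg.2 hr₁.le) (add_sub_cancel r 1)
    have hle := isMinOn_iff.1 hmin _ (hφ.1 hy hp hr₀.le (sub_nonneg.2 hr₁.le) (add_sub_cancel r 1))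
    refine le_of_mul_le_mul_left ?_ hr₀
    simp only [smul_eq_mul] at hconv
    linarith
  have hlimit := ContinuousWithinAt.closure_le (x := (0 : ℝ))
    (by simp [closure_Ioo zero_ne_one]) (by fun_prop) continuousWithinAt_const hsegment
  linarith

theorem homothety_add_mul_sq_norm_sub_le_of_isMinOn (hφ : StrongConvexOn S m φ) (hp : p ∈ S)
    (hmin : IsMinOn φ S p) (hy : y ∈ S) {s : ℝ} (hs₀ : 0 ≤ s) (hs₁ : s ≤ 1) :
    φ (AffineMap.homothety p s y) + m / 2 * (1 - s ^ 2) * ‖y - p‖ ^ 2 ≤ φ y := by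
  have hgrowth : (1 - s) * (m / 2 * ‖y - p‖ ^ 2) ≤ (1 - s) * (φ y - φ p) :=
    mul_le_mul_of_nonneg_left
      (le_sub_iff_add_le'.2 (add_mul_sq_norm_sub_le_of_isMinOn hφ hp hmin hy)) (sub_nonneg.2 hs₁)
  have hconv := hφ.2 hy hp hs₀ (sub_nonneg.2 hs₁) (add_sub_cancel s 1)
  have hpoint : s • y + (1 - s) • p = AffineMap.homothety p s y := by
    rw [AffineMap.homothety_apply, vsub_eq_sub, vadd_eq_add]
    module
  rw [hpoint, smul_eq_mul, smul_eq_mul] at hconv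
  linarith

theorem exp_neg_mul_one_add_le_exp_neg_homothety (hφ : StrongConvexOn S m φ) (hp : p ∈ S)
    (hmin : IsMinOn φ S p) (hy : y ∈ S) {s : ℝ} (hs₀ : 0 ≤ s) (hs₁ : s ≤ 1) :
    exp (-φ y) * (1 + m / 2 * (1 - s ^ 2) * ‖y - p‖ ^ 2) ≤
      exp (-φ (AffineMap.homothety p s y)) := by
  have hray := homothety_add_mul_sq_norm_sub_le_of_isMinOn hφ hp hmin hy hs₀ hs₁
  calc
    _ ≤ exp (-φ y) * exp (m / 2 * (1 - s ^ 2) * ‖y - p‖ ^ 2) := by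
      gcongr
      rw [add_comm]
      exact add_one_le_exp _
    _ ≤ _ := by
      rw [← exp_add, exp_le_exp]
      linarith

end StrongConvexity

theorem two_mul_le_of_forall_pow_mul_add_le {n : ℕ} {I k : ℝ} (hI : 0 ≤ I) (hk : 0 ≤ k)
    (h : ∀ s ∈ Set.Ioo (0 : ℝ) 1, s ^ n * (I + k * (1 - s ^ 2)) ≤ I) : 2 * k ≤ n * I := by
  have hquotient : ∀ s ∈ Set.Ioo (0 : ℝ) 1, k * (1 + s) ≤ n * (I + k * (1 - s ^ 2)) := by
    rintro s ⟨hs₀, hs₁⟩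
    have hbernoulli : 1 + n * (s - 1) ≤ s ^ n := by
      simpa using one_add_mul_le_pow (a := s - 1) (by linarith) n
    have hnonneg : 0 ≤ I + k * (1 - s ^ 2) :=
      add_nonneg hI (mul_nonneg hk (by nlinarith))
    have hlinear := (mul_le_mul_of_nonneg_right hbernoulli hnonneg).trans (h s ⟨hs₀, hs₁⟩)
    refine le_of_mul_le_mul_left ?_ (sub_pos.2 hs₁)
    linarith
  have hlimit := ContinuousWithinAt.closure_le (x := (1 : ℝ))
    (by simp [closure_Ioo zero_ne_one]) (by fun_prop) (by fun_prop) hquotient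
  linarith

theorem integral_tilted_eq_inv_smul {α F : Type*} [MeasurableSpace α] [NormedAddCommGroup F]
    [NormedSpace ℝ F] (μ : Measure α) (f : α → ℝ) (g : α → F) :
    ∫ x, g x ∂μ.tilted f = (∫ x, exp (f x) ∂μ)⁻¹ • ∫ x, exp (f x) • g x ∂μ := by
  simp only [integral_tilted, div_eq_inv_mul, mul_smul, integral_smul]

theorem sq_norm_integral_le_integral_sq_norm {α F : Type*} [MeasurableSpace α]
    [NormedAddCommGroup F] [NormedSpace ℝ F] [CompleteSpace F] {ν : Measure α}
    [IsProbabilityMeasure ν] {g : α → F} (hg : Integrable g ν)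
    (hg_sq : Integrable (fun x => ‖g x‖ ^ 2) ν) : ‖∫ x, g x ∂ν‖ ^ 2 ≤ ∫ x, ‖g x‖ ^ 2 ∂ν :=
  (convexOn_univ_norm.pow (fun _ _ => norm_nonneg _) 2).map_integral_le (by fun_prop)
    isClosed_univ (by simp) hg hg_sq

section GibbsMeasure

variable {E : Type*} [NormedAddCommGroup E] [NormedSpace ℝ E] [FiniteDimensional ℝ E]
  [MeasurableSpace E] [BorelSpace E] (μ : Measure E) [μ.IsAddHaarMeasure]

theorem integrable_exp_neg_mul_sq_norm {a : ℝ} (ha : 0 < a) :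
    Integrable (fun y : E => exp (-(a * ‖y‖ ^ 2))) μ := by
  set k := finrank ℝ E + 1 with hk
  have hpoly : Integrable (fun y : E => ((1 + ‖y‖ ^ 2) ^ k)⁻¹) μ := by
    convert integrable_rpow_neg_one_add_norm_sq (E := E) (μ := μ) (r := 2 * k)
      (by rw [hk]; push_cast; linarith) using 2 with y
    rw [neg_div, mul_div_cancel_left₀ _ two_ne_zero, rpow_neg (by positivity), rpow_natCast]
  refine (hpoly.const_mul (exp a * k.factorial / a ^ k)).mono' (by fun_prop)
    (.of_forall fun y => ?_)
  have hexp := pow_div_factorial_le_exp (a * (1 + ‖y‖ ^ 2)) (by positivity) k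
  rw [mul_pow, mul_add, mul_one, exp_add, div_le_iff₀ (by positivity)] at hexp
  rw [norm_of_nonneg (exp_pos _).le, exp_neg, ← div_eq_mul_inv, div_div,
    inv_le_comm₀ (exp_pos _) (by positivity), inv_div, div_le_iff₀ (by positivity)]
  linarith

variable {μ} {φ : E → ℝ} {m : ℝ} {p : E}

theorem integrable_exp_neg_of_strongConvexOn (hm : 0 < m) (hφ : StrongConvexOn Set.univ m φ)
    (hp : IsMinOn φ Set.univ p) : Integrable (fun y => exp (-φ y)) μ := by
  have hcont : Continuous φ :=
    continuousOn_univ.1 ((hφ.strictConvexOn hm).convexOn.continuousOn isOpen_univ)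
  refine (((integrable_exp_neg_mul_sq_norm μ (half_pos hm)).comp_sub_right p).const_mul
    (exp (-φ p))).mono' (by fun_prop) (.of_forall fun y => ?_)
  rw [norm_of_nonneg (exp_pos _).le, ← exp_add, exp_le_exp]
  linarith [add_mul_sq_norm_sub_le_of_isMinOn hφ (Set.mem_univ p) hp (Set.mem_univ y)]

theorem integral_comp_homothety {F : Type*} [NormedAddCommGroup F] [NormedSpace ℝ F] (g : E → F)
    (p : E) (s : ℝ) :
    ∫ y, g (AffineMap.homothety p s y) ∂μ = |(s ^ finrank ℝ E)⁻¹| • ∫ y, g y ∂μ := by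
  simp only [AffineMap.homothety_apply, vsub_eq_sub, vadd_eq_add]
  rw [integral_sub_right_eq_self (fun y => g (s • y + p)) p,
    Measure.integral_comp_smul μ (fun y => g (y + p)) s, integral_add_right_eq_self]

theorem integrable_comp_homothety {F : Type*} [NormedAddCommGroup F] [NormedSpace ℝ F]
    {g : E → F} (hg : Integrable g μ) (p : E) {s : ℝ} (hs : s ≠ 0) :
    Integrable (fun y => g (AffineMap.homothety p s y)) μ := by
  simpa only [AffineMap.homothety_apply, vsub_eq_sub, vadd_eq_add] using
    ((hg.comp_add_right p).comp_smul hs).comp_sub_right p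

theorem integrable_exp_neg_mul_sq_norm_sub (hm : 0 < m) (hφ : StrongConvexOn Set.univ m φ)
    (hp : IsMinOn φ Set.univ p) : Integrable (fun y => exp (-φ y) * ‖y - p‖ ^ 2) μ := by
  have hint := integrable_exp_neg_of_strongConvexOn (μ := μ) hm hφ hp
  refine ((integrable_comp_homothety hint p (s := 1 / 2) (by norm_num)).const_mul
    (8 / (3 * m))).mono' (hint.1.mul (by fun_prop)) (.of_forall fun y => ?_)
  have hscale := exp_neg_mul_one_add_le_exp_neg_homothety hφ (Set.mem_univ p) hp
    (Set.mem_univ y) (s := 1 / 2) (by norm_num) (by norm_num)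
  rw [norm_of_nonneg (by positivity), div_mul_eq_mul_div, le_div_iff₀ (by positivity)]
  linarith [exp_pos (-φ y)]

theorem mul_integral_exp_neg_mul_sq_norm_sub_le (hm : 0 < m) (hφ : StrongConvexOn Set.univ m φ)
    (hp : IsMinOn φ Set.univ p) :
    m * ∫ y, exp (-φ y) * ‖y - p‖ ^ 2 ∂μ ≤ finrank ℝ E * ∫ y, exp (-φ y) ∂μ := by
  set I := ∫ y, exp (-φ y) ∂μ
  set M := ∫ y, exp (-φ y) * ‖y - p‖ ^ 2 ∂μ
  have hint := integrable_exp_neg_of_strongConvexOn (μ := μ) hm hφ hp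
  have hint_sq := integrable_exp_neg_mul_sq_norm_sub (μ := μ) hm hφ hp
  have hI : 0 ≤ I := integral_nonneg fun _ => (exp_pos _).le
  have hM : 0 ≤ m / 2 * M := mul_nonneg (half_pos hm).le (integral_nonneg fun _ => by positivity)
  have hdilate : ∀ s ∈ Set.Ioo (0 : ℝ) 1,
      s ^ finrank ℝ E * (I + m / 2 * M * (1 - s ^ 2)) ≤ I := by
    rintro s ⟨hs₀, hs₁⟩
    rw [← le_inv_mul_iff₀ (by positivity)]
    calc
      I + m / 2 * M * (1 - s ^ 2)
          = ∫ y, (exp (-φ y) + m / 2 * (1 - s ^ 2) * (exp (-φ y) * ‖y - p‖ ^ 2)) ∂μ := by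
        rw [integral_add hint (hint_sq.const_mul _), integral_const_mul]
        ring
      _ ≤ ∫ y, exp (-φ (AffineMap.homothety p s y)) ∂μ := by
        refine integral_mono (hint.add (hint_sq.const_mul _))
          (integrable_comp_homothety hint p hs₀.ne') fun y => ?_
        refine le_of_eq_of_le ?_ (exp_neg_mul_one_add_le_exp_neg_homothety hφ (Set.mem_univ p) hp
          (Set.mem_univ y) hs₀.le hs₁.le)
        ring
      _ = (s ^ finrank ℝ E)⁻¹ * I := by
        rw [integral_comp_homothety (fun y => exp (-φ y)), abs_of_pos (by positivity), smul_eq_mul]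
  linarith [two_mul_le_of_forall_pow_mul_add_le hI hM hdilate]

theorem integral_tilted_sq_norm_sub_le (hm : 0 < m) (hφ : StrongConvexOn Set.univ m φ)
    (hp : IsMinOn φ Set.univ p) :
    ∫ y, ‖y - p‖ ^ 2 ∂μ.tilted (fun y => -φ y) ≤ finrank ℝ E / m := by
  have hI := integral_exp_pos (integrable_exp_neg_of_strongConvexOn (μ := μ) hm hφ hp)
  simp only [integral_tilted_eq_inv_smul, smul_eq_mul]
  rw [inv_mul_le_iff₀ hI, mul_div_assoc', le_div_iff₀' hm, mul_comm (∫ y, exp (-φ y) ∂μ)]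
  exact mul_integral_exp_neg_mul_sq_norm_sub_le hm hφ hp

theorem norm_integral_tilted_sub_le (hm : 0 < m) (hφ : StrongConvexOn Set.univ m φ)
    (hp : IsMinOn φ Set.univ p) :
    ‖(∫ y, y ∂μ.tilted fun y => -φ y) - p‖ ≤ √(finrank ℝ E / m) := by
  have := FiniteDimensional.complete ℝ E
  have hint := integrable_exp_neg_of_strongConvexOn (μ := μ) hm hφ hp
  have := isProbabilityMeasure_tilted hint
  have hint_sq : Integrable (fun y => ‖y - p‖ ^ 2) (μ.tilted fun y => -φ y) :=
    (integrable_tilted_iff hint _).2 (integrable_exp_neg_mul_sq_norm_sub hm hφ hp)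
  have hint_sub : Integrable (fun y => y - p) (μ.tilted fun y => -φ y) :=
    ((memLp_two_iff_integrable_sq_norm (by fun_prop)).2 hint_sq).integrable one_le_two
  have hint_id : Integrable (fun y => y) (μ.tilted fun y => -φ y) :=
    (hint_sub.add (integrable_const p)).congr (.of_forall fun y => sub_add_cancel y p)
  have hmean : (∫ y, y ∂μ.tilted fun y => -φ y) - p = ∫ y, (y - p) ∂μ.tilted fun y => -φ y := by
    rw [integral_sub hint_id (integrable_const p), integral_const, probReal_univ, one_smul]
  rw [hmean]
  exact le_sqrt_of_sq_le ((sq_norm_integral_le_integral_sq_norm hint_sub hint_sq).trans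
    (integral_tilted_sq_norm_sub_le hm hφ hp))

end GibbsMeasure

section ProximalObjective

variable {E : Type*} [NormedAddCommGroup E] [InnerProductSpace ℝ E]

theorem strongConvexOn_add_sq_norm_sub_div {S : Set E} {f : E → ℝ} (hf : ConvexOn ℝ S f) {δ : ℝ}
    (hδ : 0 ≤ δ) (t : ℝ) (x : E) :
    StrongConvexOn S (1 / (t * δ)) fun z => (f z + ‖z - x‖ ^ 2 / (2 * t)) / δ := by
  have haffine : ConvexOn ℝ S fun z => ‖x‖ ^ 2 / (2 * t * δ) - inner ℝ x z / (t * δ) := by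
    refine ⟨hf.1, fun y _ z _ a b _ _ hab => le_of_eq ?_⟩
    simp only [inner_add_right, inner_smul_right, smul_eq_mul]
    linear_combination (-(‖x‖ ^ 2 / (2 * t * δ))) * hab
  rw [strongConvexOn_iff_convex]
  refine ((hf.smul (inv_nonneg.2 hδ)).add haffine).congr fun z _ => ?_
  simp only [Pi.add_apply, smul_eq_mul, norm_sub_sq_real, real_inner_comm x z]
  ring

variable [FiniteDimensional ℝ E] [MeasurableSpace E] [BorelSpace E]

theorem hjprox_error_bound_general (μ : Measure E) [μ.IsAddHaarMeasure] {f : E → ℝ}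
    (hf : ConvexOn ℝ Set.univ f) {t δ : ℝ} (ht : 0 < t) (hδ : 0 < δ) {x p : E}
    (hp : IsMinOn (fun z => f z + ‖z - x‖ ^ 2 / (2 * t)) Set.univ p) :
    ‖(∫ z, exp (-(f z + ‖z - x‖ ^ 2 / (2 * t)) / δ) ∂μ)⁻¹ •
        (∫ z, exp (-(f z + ‖z - x‖ ^ 2 / (2 * t)) / δ) • z ∂μ) - p‖ ≤
      √(finrank ℝ E * t * δ) := by
  have hmin : IsMinOn (fun z => (f z + ‖z - x‖ ^ 2 / (2 * t)) / δ) Set.univ p :=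
    hp.comp_mono fun _ _ h => div_le_div_of_nonneg_right h hδ.le
  have hbound := norm_integral_tilted_sub_le (μ := μ) (by positivity)
    (strongConvexOn_add_sq_norm_sub_div hf hδ.le t x) hmin
  simpa only [integral_tilted_eq_inv_smul, neg_div, div_div_eq_mul_div, div_one, mul_assoc]
    using hbound

end ProximalObjective

/-- **HJ-Prox error bound.** For a convex `f : ℝⁿ → ℝ`, `t, δ > 0`, with finite HJ-Prox
integrals, the HJ-Prox approximation is within `√(n t δ)` of the exact proximal operator,
uniformly in `x`. -/
theorem hjprox_error_bound (n : ℕ) (f : EuclideanSpace ℝ (Fin n) → ℝ)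
    (hf : ConvexOn ℝ Set.univ f) (t δ : ℝ) (ht : 0 < t) (hδ : 0 < δ)
    (P : EuclideanSpace ℝ (Fin n) → EuclideanSpace ℝ (Fin n))
    (hP : ∀ x, IsMinOn (fun z => f z + ‖z - x‖ ^ 2 / (2 * t)) Set.univ (P x))
    (hint1 : ∀ x, Integrable (fun z : EuclideanSpace ℝ (Fin n) =>
      Real.exp (-(f z + ‖z - x‖ ^ 2 / (2 * t)) / δ)))
    (hint2 : ∀ x, Integrable (fun z : EuclideanSpace ℝ (Fin n) =>
      Real.exp (-(f z + ‖z - x‖ ^ 2 / (2 * t)) / δ) • z)) :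
    ∀ x : EuclideanSpace ℝ (Fin n),
      ‖(∫ z : EuclideanSpace ℝ (Fin n),
          Real.exp (-(f z + ‖z - x‖ ^ 2 / (2 * t)) / δ))⁻¹ •
        (∫ z : EuclideanSpace ℝ (Fin n),
          Real.exp (-(f z + ‖z - x‖ ^ 2 / (2 * t)) / δ) • z) - P x‖
        ≤ Real.sqrt (n * t * δ) := by
  intro x
  simpa using hjprox_error_bound_general volume hf ht hδ (hP x)
end

section
/- Let f : ℝⁿ → ℝ be convex, t > 0, δ > 0, x ∈ ℝⁿ, set z* = prox_{tf}(x), and define g(w) = f(z* + w) + ‖z* + w − x‖²/(2t) − f(z*) − ‖z* − x‖²/(2t). Let W be a random vector with density ρ_δ(w) proportional to exp(−g(w)/δ) (assumed normalizable). Then g is differentiable Lebesgue-almost everywhere and E[⟨W, ∇g(W)⟩] = n δ; moreover, for each coordinate j, E[W_j · ∂g/∂w_j(W)] = δ. -/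
open MeasureTheory Real
open scoped RealInnerProductSpace

/-!
Put `V = G / δ`. If `u` is locally Lipschitz and `u`, `∂ᵥu` are integrable, then `∫ ∂ᵥu = 0`; for
`u = ℓ e⁻ⱽ` with `ℓ` a linear form this reads `∫ ℓ ∂ᵥV e⁻ⱽ = ℓ v ∫ e⁻ⱽ`. Only the integrability of
`ℓ ∂ᵥV e⁻ⱽ` needs an argument, and it follows from convexity and the integrability of `e⁻ⱽ`:

* A sublevel set of `V` is convex of finite measure, hence bounded, so `V` grows at least linearly.
* The difference quotients of `e⁻ⱽ` along dilations are nonnegative up to a multiple of the dilated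
  density, and their integrals are known by scaling, so by Fatou's lemma the radial derivative
  `V'(w) w` is integrable against `e⁻ⱽ`.
* The subgradient inequality at `w`, tested at `± v`, bounds `|∂ᵥV|` by the radial derivative plus
  a constant, so `∂ᵥV` is integrable against `e⁻ⱽ` too.
* The last statement also holds for `V / 2`; in `e⁻ⱽ = e^(-V/2) e^(-V/2)` one factor absorbs the
  linear growth of `ℓ` and the other integrates `∂ᵥV`.
-/

open Bornology Filter Metric Module Set
open scoped ENNReal NNReal Topology

section Fatou

variable {α ι F : Type*} {m : MeasurableSpace α} {μ : Measure α} [NormedAddCommGroup F]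

theorem integrable_of_tendsto_of_integral_norm_le {l : Filter ι} [l.NeBot]
    [l.IsCountablyGenerated] {u : ι → α → F} {f : α → F} {C : ℝ}
    (hu : ∀ i, AEStronglyMeasurable (u i) μ) (hu_int : ∀ᶠ i in l, Integrable (u i) μ)
    (hu_le : ∀ᶠ i in l, ∫ x, ‖u i x‖ ∂μ ≤ C)
    (hlim : ∀ᵐ x ∂μ, Tendsto (fun i => u i x) l (𝓝 (f x))) : Integrable f μ := by
  refine ⟨aestronglyMeasurable_of_tendsto_ae l hu hlim, ?_⟩
  have hu_lintegral : ∀ᶠ i in l, ∫⁻ x, ‖u i x‖ₑ ∂μ ≤ ENNReal.ofReal C := by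
    filter_upwards [hu_int, hu_le] with i hi hC
    rw [← ofReal_integral_norm_eq_lintegral_enorm hi]
    exact ENNReal.ofReal_le_ofReal hC
  calc ∫⁻ x, ‖f x‖ₑ ∂μ = ∫⁻ x, liminf (fun i => ‖u i x‖ₑ) l ∂μ :=
        lintegral_congr_ae (hlim.mono fun x hx => hx.enorm.liminf_eq.symm)
    _ ≤ liminf (fun i => ∫⁻ x, ‖u i x‖ₑ ∂μ) l := lintegral_liminf_le' fun i => (hu i).enorm
    _ ≤ ENNReal.ofReal C := liminf_le_of_frequently_le' hu_lintegral.frequently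
    _ < ∞ := ENNReal.ofReal_lt_top

end Fatou

section WithDensity

variable {α F : Type*} {m : MeasurableSpace α} {μ : Measure α} [NormedAddCommGroup F]
  [NormedSpace ℝ F]

theorem integral_withDensity_ofReal {p : α → ℝ} (hp : Measurable p) (hp0 : ∀ x, 0 ≤ p x)
    (φ : α → F) :
    ∫ x, φ x ∂(μ.withDensity fun x => ENNReal.ofReal (p x)) = ∫ x, p x • φ x ∂μ := by
  rw [integral_withDensity_eq_integral_toReal_smul hp.ennreal_ofReal
    (ae_of_all _ fun _ => ENNReal.ofReal_lt_top)]
  simp only [ENNReal.toReal_ofReal (hp0 _)]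

end WithDensity

section Cutoff

variable {E : Type*} [NormedAddCommGroup E]

/-- The tent function of slope `r`, equal to `1` at the origin and vanishing outside the ball of
radius `r⁻¹`. As `r → 0` it is a Lipschitz cutoff whose Lipschitz constant also tends to `0`. -/
def tentCutoff (r : ℝ≥0) (w : E) : ℝ :=
  max (1 - r * ‖w‖) 0

theorem tentCutoff_nonneg (r : ℝ≥0) (w : E) : 0 ≤ tentCutoff r w :=
  le_max_right _ _

theorem tentCutoff_le_one (r : ℝ≥0) (w : E) : tentCutoff r w ≤ 1 :=
  max_le (sub_le_self _ (by positivity)) zero_le_one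

theorem lipschitzWith_tentCutoff (r : ℝ≥0) : LipschitzWith r (tentCutoff r : E → ℝ) := by
  refine LipschitzWith.max_const (.of_dist_le_mul fun w w' => ?_) 0
  calc dist (1 - r * ‖w‖) (1 - r * ‖w'‖) = r * dist ‖w‖ ‖w'‖ := by
        rw [dist_sub_left, Real.dist_eq, ← mul_sub, abs_mul, NNReal.abs_eq, Real.dist_eq]
    _ ≤ r * dist w w' := by gcongr; simpa using lipschitzWith_one_norm.dist_le_mul w w'

theorem hasCompactSupport_tentCutoff [ProperSpace E] {r : ℝ≥0} (hr : 0 < r) :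
    HasCompactSupport (tentCutoff r : E → ℝ) := by
  refine .of_support_subset_isCompact (isCompact_closedBall 0 (r : ℝ)⁻¹) fun w hw => ?_
  have hpos : 0 < tentCutoff r w := (tentCutoff_nonneg r w).lt_of_ne' hw
  have hlt : r * ‖w‖ < 1 := by simpa [tentCutoff] using hpos
  rw [mem_closedBall_zero_iff, ← one_div, le_div_iff₀' (NNReal.coe_pos.2 hr)]
  exact hlt.le

theorem tendsto_tentCutoff (w : E) :
    Tendsto (fun r => tentCutoff r w) (𝓝 0) (𝓝 1) := by
  have hcont : Continuous fun r : ℝ≥0 => tentCutoff r w := by unfold tentCutoff; fun_prop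
  simpa [tentCutoff] using hcont.tendsto 0

end Cutoff

section LocallyLipschitz

variable {E : Type*} [NormedAddCommGroup E] [NormedSpace ℝ E] [FiniteDimensional ℝ E]
  [MeasurableSpace E] [BorelSpace E] {μ : Measure E} [μ.IsAddHaarMeasure]

theorem ae_differentiableAt_of_locallyLipschitz {F : Type*} [NormedAddCommGroup F]
    [NormedSpace ℝ F] [FiniteDimensional ℝ F] {u : E → F} (hu : LocallyLipschitz u) :
    ∀ᵐ w ∂μ, DifferentiableAt ℝ u w := by
  have hball : ∀ N : ℕ, ∀ᵐ w ∂μ, w ∈ ball (0 : E) N → DifferentiableAt ℝ u w := by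
    intro N
    obtain ⟨K, hK⟩ := (hu.locallyLipschitzOn (s := closedBall (0 : E) N))
      |>.exists_lipschitzOnWith_of_compact (isCompact_closedBall _ _)
    filter_upwards [(hK.mono ball_subset_closedBall).ae_differentiableWithinAt_of_mem (μ := μ)]
      with w hw hwN
    exact (hw hwN).differentiableAt (isOpen_ball.mem_nhds hwN)
  filter_upwards [ae_all_iff.2 hball] with w hw
  obtain ⟨N, hN⟩ := exists_nat_gt ‖w‖
  exact hw N (mem_ball_zero_iff.2 hN)

theorem integral_lineDeriv_mul_eq_of_locallyLipschitz {u φ : E → ℝ} {K : ℝ≥0}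
    (hu : LocallyLipschitz u) (hφ : LipschitzWith K φ) (hφc : HasCompactSupport φ) (v : E) :
    ∫ w, lineDeriv ℝ u w v * φ w ∂μ = ∫ w, lineDeriv ℝ φ w (-v) * u w ∂μ := by
  obtain ⟨R, hR⟩ := hφc.isCompact.isBounded.subset_ball 0
  obtain ⟨L, hL⟩ := (hu.locallyLipschitzOn (s := closedBall (0 : E) R))
    |>.exists_lipschitzOnWith_of_compact (isCompact_closedBall _ _)
  obtain ⟨g, hg, hug⟩ := (hL.mono ball_subset_closedBall).extend_real
  have heq : ∀ w ∈ tsupport φ, u =ᶠ[𝓝 w] g := fun w hw =>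
    hug.eventuallyEq_of_mem (isOpen_ball.mem_nhds (hR hw))
  have hleft : ∀ w, lineDeriv ℝ u w v * φ w = lineDeriv ℝ g w v * φ w := by
    intro w
    by_cases hw : w ∈ tsupport φ
    · rw [(heq w hw).lineDeriv_eq]
    · rw [image_eq_zero_of_notMem_tsupport hw, mul_zero, mul_zero]
  have hright : ∀ w, lineDeriv ℝ φ w (-v) * u w = lineDeriv ℝ φ w (-v) * g w := by
    intro w
    by_cases hw : w ∈ tsupport φ
    · rw [(heq w hw).eq_of_nhds]
    · have hzero : lineDeriv ℝ φ w (-v) = 0 := by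
        rw [(notMem_tsupport_iff_eventuallyEq.1 hw).lineDeriv_eq]
        simp [lineDeriv]
      rw [hzero, zero_mul, zero_mul]
  simp only [hleft, hright]
  exact hg.integral_lineDeriv_mul_eq hφ hφc v

theorem integral_lineDeriv_eq_zero_of_locallyLipschitz {u : E → ℝ} {v : E}
    (hu : LocallyLipschitz u) (hu_int : Integrable u μ)
    (hu'_int : Integrable (fun w => lineDeriv ℝ u w v) μ) :
    ∫ w, lineDeriv ℝ u w v ∂μ = 0 := by
  have hleft : Tendsto (fun r => ∫ w, lineDeriv ℝ u w v * tentCutoff r w ∂μ) (𝓝[>] 0)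
      (𝓝 (∫ w, lineDeriv ℝ u w v ∂μ)) := by
    refine tendsto_integral_filter_of_dominated_convergence (fun w => ‖lineDeriv ℝ u w v‖)
      (.of_forall fun r => hu'_int.aestronglyMeasurable.mul
        (lipschitzWith_tentCutoff r).continuous.aestronglyMeasurable)
      (.of_forall fun r => ae_of_all _ fun w => ?_) hu'_int.norm (ae_of_all _ fun w => ?_)
    · rw [norm_mul, Real.norm_of_nonneg (tentCutoff_nonneg r w)]
      exact mul_le_of_le_one_right (norm_nonneg _) (tentCutoff_le_one r w)
    · simpa using ((tendsto_tentCutoff w).mono_left nhdsWithin_le_nhds).const_mul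
        (lineDeriv ℝ u w v)
  have hright : Tendsto (fun r : ℝ≥0 => ∫ w, lineDeriv ℝ (tentCutoff r) w (-v) * u w ∂μ) (𝓝[>] 0)
      (𝓝 0) := by
    refine squeeze_zero_norm (a := fun r : ℝ≥0 => r * ‖v‖ * ∫ w, ‖u w‖ ∂μ) (fun r => ?_) ?_
    · rw [← integral_const_mul]
      refine norm_integral_le_of_norm_le (hu_int.norm.const_mul _) (ae_of_all _ fun w => ?_)
      rw [norm_mul, ← norm_neg v]
      gcongr
      exact norm_lineDeriv_le_of_lipschitz ℝ (lipschitzWith_tentCutoff r)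
    · have hcont : Continuous fun r : ℝ≥0 => r * ‖v‖ * ∫ w, ‖u w‖ ∂μ := by fun_prop
      simpa using (hcont.tendsto 0).mono_left nhdsWithin_le_nhds
  refine tendsto_nhds_unique (hleft.congr' ?_) hright
  filter_upwards [self_mem_nhdsWithin] with r hr
  exact integral_lineDeriv_mul_eq_of_locallyLipschitz hu (lipschitzWith_tentCutoff r)
    (hasCompactSupport_tentCutoff hr) v

end LocallyLipschitz

section Convex

variable {E : Type*} [NormedAddCommGroup E] [NormedSpace ℝ E] {V : E → ℝ}

theorem fderiv_sub_le_sub_of_convexOn (hV : ConvexOn ℝ univ V) {w : E}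
    (hw : DifferentiableAt ℝ V w) (u : E) : fderiv ℝ V w (u - w) ≤ V u - V w := by
  have hline : ConvexOn ℝ univ (V ∘ AffineMap.lineMap (k := ℝ) w u) := hV.comp_affineMap _
  have hderiv : HasDerivAt (V ∘ AffineMap.lineMap (k := ℝ) w u) (fderiv ℝ V w (u - w)) 0 :=
    HasFDerivAt.comp_hasDerivAt 0 (by simpa using hw.hasFDerivAt) AffineMap.hasDerivAt_lineMap
  simpa [slope_def_field] using
    hline.le_slope_of_hasDerivAt (mem_univ 0) (mem_univ 1) zero_lt_one hderiv

theorem abs_fderiv_le_of_convexOn (hV : ConvexOn ℝ univ V) {w : E}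
    (hw : DifferentiableAt ℝ V w) (v : E) :
    |fderiv ℝ V w v| ≤ fderiv ℝ V w w + (|V v| + |V (-v)| - V w) := by
  have hpos := fderiv_sub_le_sub_of_convexOn hV hw v
  have hneg := fderiv_sub_le_sub_of_convexOn hV hw (-v)
  simp only [map_sub, map_neg] at hpos hneg
  rw [abs_le]
  constructor <;>
    linarith [le_abs_self (V v), le_abs_self (V (-v)), abs_nonneg (V v), abs_nonneg (V (-v))]

theorem sub_div_mul_norm_le_of_convexOn (hV : ConvexOn ℝ univ V) {L r : ℝ} (hL : 0 < L)
    (hsub : ∀ u, V u ≤ r → ‖u‖ < L) {w : E} (hw : L ≤ ‖w‖) :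
    (r - V 0) / L * ‖w‖ ≤ V w - V 0 := by
  have hw0 : 0 < ‖w‖ := hL.trans_le hw
  have hnorm : ‖(L / ‖w‖) • w‖ = L := by
    rw [norm_smul, norm_div, norm_norm, Real.norm_of_nonneg hL.le, div_mul_cancel₀ _ hw0.ne']
  have hsphere : r < V ((L / ‖w‖) • w) := by
    by_contra! hle
    exact (hsub _ hle).ne hnorm
  have hseg : V ((L / ‖w‖) • w) ≤ (1 - L / ‖w‖) * V 0 + L / ‖w‖ * V w := by
    simpa using hV.2 (mem_univ 0) (mem_univ w) (sub_nonneg.2 ((div_le_one hw0).2 hw))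
      (by positivity) (sub_add_cancel 1 (L / ‖w‖))
  calc (r - V 0) / L * ‖w‖ ≤ L / ‖w‖ * (V w - V 0) / L * ‖w‖ := by gcongr; linarith
    _ = V w - V 0 := by field_simp

theorem exists_pos_forall_mul_norm_le_add [FiniteDimensional ℝ E] (hV : ConvexOn ℝ univ V) {r : ℝ}
    (hr : V 0 < r) (hbdd : IsBounded {w | V w ≤ r}) :
    ∃ a > 0, ∃ b, ∀ w, a * ‖w‖ ≤ V w + b := by
  obtain ⟨L, hL, hsub⟩ := hbdd.exists_pos_norm_lt
  obtain ⟨m, hm⟩ := (isCompact_closedBall (0 : E) L).bddBelow_image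
    hV.locallyLipschitz.continuous.continuousOn
  refine ⟨(r - V 0) / L, div_pos (sub_pos.2 hr) hL, max (-V 0) (r - V 0 - m), fun w => ?_⟩
  rcases le_total ‖w‖ L with hw | hw
  · have hmw : m ≤ V w := hm (mem_image_of_mem V (mem_closedBall_zero_iff.2 hw))
    have hle : (r - V 0) / L * ‖w‖ ≤ r - V 0 := by
      rw [div_mul_eq_mul_div, div_le_iff₀ hL]
      exact mul_le_mul_of_nonneg_left hw (sub_pos.2 hr).le
    linarith [le_max_right (-V 0) (r - V 0 - m)]
  · linarith [le_max_left (-V 0) (r - V 0 - m), sub_div_mul_norm_le_of_convexOn hV hL hsub hw]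

theorem mul_sub_le_sub_of_convexOn (hV : ConvexOn ℝ univ V) {h : ℝ} (hh : 0 ≤ h) (w : E) :
    h * (V w - V 0) ≤ V (w + h • w) - V w := by
  have hh1 : 0 < 1 + h := by linarith
  have hw : (h / (1 + h)) • (0 : E) + (1 + h)⁻¹ • (w + h • w) = w := by
    match_scalars; field_simp
  have hconv : V ((h / (1 + h)) • (0 : E) + (1 + h)⁻¹ • (w + h • w)) ≤
      h / (1 + h) * V 0 + (1 + h)⁻¹ * V (w + h • w) :=
    hV.2 (mem_univ 0) (mem_univ _) (by positivity) (by positivity) (by field_simp; ring)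
  rw [hw] at hconv
  have hmul : (1 + h) * V w ≤ h * V 0 + V (w + h • w) := by
    calc (1 + h) * V w ≤ (1 + h) * (h / (1 + h) * V 0 + (1 + h)⁻¹ * V (w + h • w)) := by gcongr
      _ = h * V 0 + V (w + h • w) := by field_simp
  linarith

theorem neg_mul_exp_neg_le_slope (hV : ConvexOn ℝ univ V) {C h : ℝ} (hh : 0 < h) {w : E}
    (hC : V 0 - C ≤ V w) :
    -C * exp (-V (w + h • w)) ≤ h⁻¹ * (exp (-V w) - exp (-V (w + h • w))) := by
  have hdil := mul_sub_le_sub_of_convexOn hV hh.le w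
  have hlow : h * -C ≤ h * (V w - V 0) := by gcongr; linarith
  have hexp : exp (-V w) = exp (-V (w + h • w)) * exp (V (w + h • w) - V w) := by
    rw [← exp_add]; congr 1; ring
  rw [le_inv_mul_iff₀ hh]
  calc h * (-C * exp (-V (w + h • w))) = exp (-V (w + h • w)) * (h * -C) := by ring
    _ ≤ exp (-V (w + h • w)) * (exp (V (w + h • w) - V w) - 1) := by
      gcongr
      linarith [add_one_le_exp (V (w + h • w) - V w)]
    _ = exp (-V w) - exp (-V (w + h • w)) := by rw [hexp]; ring

theorem hasFDerivAt_exp_neg {w : E} (hw : DifferentiableAt ℝ V w) :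
    HasFDerivAt (fun w => exp (-V w)) (-(exp (-V w) • fderiv ℝ V w)) w := by
  simpa using hw.hasFDerivAt.neg.exp

end Convex

section FiniteMeasure

variable {E : Type*} [NormedAddCommGroup E] [MeasurableSpace E] [BorelSpace E]
  {μ : Measure E} [μ.IsAddHaarMeasure] {s : Set E}

theorem measure_eq_top_of_forall_exists_ball_subset {r : ℝ} (hr : 0 < r)
    (hfar : ∀ R : ℝ, ∃ m, R < ‖m‖ ∧ ball m r ⊆ s) : μ s = ∞ := by
  have : Std.Symm fun a b : E => Disjoint (ball a r) (ball b r) := ⟨fun _ _ h => h.symm⟩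
  obtain ⟨m, hms, hdisj⟩ := exists_seq_of_forall_finset_exists' (fun a : E => ball a r ⊆ s)
    (fun a b => Disjoint (ball a r) (ball b r)) fun t _ => by
      obtain ⟨b, hb, hbs⟩ := hfar (∑ a ∈ t, ‖a‖ + (r + r))
      refine ⟨b, hbs, fun a ha => ball_disjoint_ball ?_⟩
      have hle : ‖a‖ ≤ ∑ a ∈ t, ‖a‖ :=
        Finset.single_le_sum (f := fun a : E => ‖a‖) (fun _ _ => norm_nonneg _) ha
      linarith [norm_sub_norm_le b a, dist_eq_norm b a, dist_comm a b]
  by_contra hs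
  have hfin := Measure.finite_const_le_meas_of_disjoint_iUnion μ (measure_ball_pos μ 0 hr)
    (fun k : ℕ => measurableSet_ball (x := m k)) hdisj
    (measure_ne_top_of_subset (iUnion_subset hms) hs)
  simp only [Measure.addHaar_ball_center, le_refl, ofPred_true] at hfin
  exact infinite_univ hfin

variable [NormedSpace ℝ E]

theorem isBounded_of_convex_of_measure_ne_top (hs : Convex ℝ s) (hs_int : (interior s).Nonempty)
    (hs_top : μ s ≠ ∞) : IsBounded s := by
  obtain ⟨x, hx⟩ := hs_int
  obtain ⟨r, hr, hrs⟩ := Metric.isOpen_iff.1 isOpen_interior x hx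
  by_contra hunb
  refine hs_top (measure_eq_top_of_forall_exists_ball_subset (half_pos hr) fun R => ?_)
  obtain ⟨y, hy, hyR⟩ : ∃ y ∈ s, 2 * R + ‖x‖ < ‖y‖ := by
    by_contra! hle
    exact hunb (isBounded_iff_forall_norm_le.2 ⟨_, hle⟩)
  -- The homothety of centre `y` and ratio `1 / 2` maps `ball x r` into `s`.
  refine ⟨midpoint ℝ x y, ?_, fun z hz => ?_⟩
  · have hy_eq : y = (2 : ℝ) • midpoint ℝ x y - x := by
      rw [midpoint_eq_smul_add, invOf_eq_inv]; module
    have hle : ‖y‖ ≤ 2 * ‖midpoint ℝ x y‖ + ‖x‖ := by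
      simpa [← hy_eq, norm_smul] using norm_sub_le ((2 : ℝ) • midpoint ℝ x y) x
    linarith
  · have hmem : (2 : ℝ) • z - y ∈ ball x r := by
      have heq : (2 : ℝ) • z - y - x = (2 : ℝ) • (z - midpoint ℝ x y) := by
        rw [midpoint_eq_smul_add, invOf_eq_inv]; module
      rw [mem_ball_iff_norm] at hz ⊢
      rw [heq, norm_smul, Real.norm_two]
      linarith
    have hz_eq : z = midpoint ℝ ((2 : ℝ) • z - y) y := by
      rw [midpoint_eq_smul_add, invOf_eq_inv]; module
    rw [hz_eq]
    exact hs.midpoint_mem (interior_subset (hrs hmem)) hy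

end FiniteMeasure

section Gibbs

variable {E : Type*} [NormedAddCommGroup E] [NormedSpace ℝ E] [FiniteDimensional ℝ E]
  [MeasurableSpace E] [BorelSpace E] {μ : Measure E} [μ.IsAddHaarMeasure] {V : E → ℝ}

theorem isBounded_sublevel_of_integrable_exp_neg (hV : ConvexOn ℝ univ V)
    (hV_int : Integrable (fun w => exp (-V w)) μ) {r : ℝ} (hr : V 0 < r) :
    IsBounded {w | V w ≤ r} := by
  have hconv : Convex ℝ {w | V w ≤ r} := by simpa using hV.convex_le r
  refine isBounded_of_convex_of_measure_ne_top hconv ⟨0, ?_⟩ (μ := μ) ?_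
  · exact mem_interior_iff_mem_nhds.2 <|
      mem_of_superset (hV.locallyLipschitz.continuous.continuousAt.eventually_lt_const hr)
        fun w (hw : V w < r) => hw.le
  · refine ne_top_of_le_ne_top (hV_int.measure_ge_lt_top (exp_pos (-r))).ne (measure_mono ?_)
    exact fun w hw => exp_le_exp.2 (neg_le_neg hw)

theorem exists_forall_mul_norm_le_add_of_integrable_exp_neg (hV : ConvexOn ℝ univ V)
    (hV_int : Integrable (fun w => exp (-V w)) μ) : ∃ a > 0, ∃ b, ∀ w, a * ‖w‖ ≤ V w + b :=
  exists_pos_forall_mul_norm_le_add hV (lt_add_one _)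
    (isBounded_sublevel_of_integrable_exp_neg hV hV_int (lt_add_one _))

theorem exists_forall_le_of_integrable_exp_neg (hV : ConvexOn ℝ univ V)
    (hV_int : Integrable (fun w => exp (-V w)) μ) : ∃ m, ∀ w, m ≤ V w := by
  obtain ⟨a, ha, b, hab⟩ := exists_forall_mul_norm_le_add_of_integrable_exp_neg hV hV_int
  refine ⟨-b, fun w => ?_⟩
  linarith [hab w, mul_nonneg ha.le (norm_nonneg w)]

theorem integrable_exp_neg_half (hV : ConvexOn ℝ univ V)
    (hV_int : Integrable (fun w => exp (-V w)) μ) :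
    Integrable (fun w => exp (-(V w / 2))) μ := by
  have hcont := hV.locallyLipschitz.continuous
  refine ((hV_int.comp_smul (inv_ne_zero two_ne_zero)).const_mul (exp (V 0 / 2))).mono'
    (by fun_prop) (ae_of_all _ fun w => ?_)
  have hmid : V ((2 : ℝ)⁻¹ • w) ≤ (V 0 + V w) / 2 := by
    have hconv : V ((2 : ℝ)⁻¹ • (0 : E) + (2 : ℝ)⁻¹ • w) ≤ (2 : ℝ)⁻¹ • V 0 + (2 : ℝ)⁻¹ • V w :=
      hV.2 (mem_univ 0) (mem_univ w) (by norm_num) (by norm_num) (by norm_num)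
    rw [smul_zero, zero_add, smul_eq_mul, smul_eq_mul] at hconv
    linarith
  rw [Real.norm_of_nonneg (exp_nonneg _), ← exp_add]
  exact exp_le_exp.2 (by linarith)

theorem integrable_exp_neg_add_smul (hV_int : Integrable (fun w => exp (-V w)) μ) {h : ℝ}
    (hh : 0 ≤ h) : Integrable (fun w => exp (-V (w + h • w))) μ := by
  simpa only [add_smul, one_smul] using hV_int.comp_smul (R := 1 + h) (by positivity)

theorem integral_exp_neg_add_smul (V : E → ℝ) {h : ℝ} (hh : 0 ≤ h) :
    ∫ w, exp (-V (w + h • w)) ∂μ = ((1 + h) ^ finrank ℝ E)⁻¹ * ∫ w, exp (-V w) ∂μ := by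
  simpa only [add_smul, one_smul, smul_eq_mul] using
    Measure.integral_comp_smul_of_nonneg μ (fun w => exp (-V w)) (1 + h) (hR := by positivity)

theorem one_sub_inv_one_add_pow_le {h : ℝ} (hh : 0 ≤ h) (n : ℕ) :
    1 - ((1 + h) ^ n)⁻¹ ≤ n * h := by
  have hh1 : 0 < 1 + h := by linarith
  have hbern : 1 + n * ((1 + h)⁻¹ - 1) ≤ (1 + h)⁻¹ ^ n :=
    one_add_mul_sub_le_pow (by linarith [inv_pos.2 hh1]) n
  have hinv : 1 - (1 + h)⁻¹ ≤ h := by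
    rw [sub_le_comm, ← one_div, le_div_iff₀ hh1]
    nlinarith
  rw [inv_pow] at hbern
  linarith [mul_le_mul_of_nonneg_left hinv n.cast_nonneg]

theorem integral_norm_radial_slope_le (hV : ConvexOn ℝ univ V)
    (hV_int : Integrable (fun w => exp (-V w)) μ) {C h : ℝ} (hC : ∀ u, V 0 - C ≤ V u)
    (hh : 0 < h) :
    ∫ w, ‖h⁻¹ * (exp (-V w) - exp (-V (w + h • w)))‖ ∂μ ≤
      (finrank ℝ E + 2 * C) * ∫ w, exp (-V w) ∂μ := by
  have hC0 : 0 ≤ C := by linarith [hC 0]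
  set Z := ∫ w, exp (-V w) ∂μ
  have hZ : 0 ≤ Z := integral_nonneg fun w => exp_nonneg _
  set r := ((1 + h) ^ finrank ℝ E)⁻¹
  have hr : r ≤ 1 := inv_le_one_of_one_le₀ (one_le_pow₀ (by linarith))
  have hdil := integrable_exp_neg_add_smul hV_int hh.le
  have hslope : Integrable (fun w => h⁻¹ * (exp (-V w) - exp (-V (w + h • w)))) μ :=
    (hV_int.sub hdil).const_mul h⁻¹
  calc ∫ w, ‖h⁻¹ * (exp (-V w) - exp (-V (w + h • w)))‖ ∂μ
      ≤ ∫ w, (h⁻¹ * (exp (-V w) - exp (-V (w + h • w))) + 2 * C * exp (-V (w + h • w))) ∂μ := by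
        refine integral_mono hslope.norm (hslope.add (hdil.const_mul _)) fun w => ?_
        have hlow := neg_mul_exp_neg_le_slope hV hh (hC w)
        have hpos : 0 ≤ C * exp (-V (w + h • w)) := by positivity
        exact abs_le.2 ⟨by linarith, by linarith⟩
    _ = h⁻¹ * (1 - r) * Z + 2 * C * r * Z := by
        rw [integral_add hslope (hdil.const_mul _), integral_const_mul, integral_const_mul,
          integral_sub hV_int hdil, integral_exp_neg_add_smul V hh.le]
        ring
    _ ≤ (finrank ℝ E : ℝ) * Z + 2 * C * 1 * Z := by
        gcongr
        rw [inv_mul_le_iff₀ hh, mul_comm]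
        exact one_sub_inv_one_add_pow_le hh.le _
    _ = (finrank ℝ E + 2 * C) * Z := by ring

theorem integrable_fderiv_self_mul_exp_neg (hV : ConvexOn ℝ univ V)
    (hV_int : Integrable (fun w => exp (-V w)) μ) :
    Integrable (fun w => fderiv ℝ V w w * exp (-V w)) μ := by
  have hcont := hV.locallyLipschitz.continuous
  obtain ⟨m, hm⟩ := exists_forall_le_of_integrable_exp_neg hV hV_int
  have hC : ∀ u, V 0 - (V 0 - m) ≤ V u := by simpa using hm
  refine integrable_of_tendsto_of_integral_norm_le (l := 𝓝[>] (0 : ℝ))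
    (u := fun h w => h⁻¹ * (exp (-V w) - exp (-V (w + h • w)))) (fun h => by fun_prop) ?_
    (eventually_mem_nhdsWithin.mono fun h hh => integral_norm_radial_slope_le hV hV_int hC hh) ?_
  · filter_upwards [self_mem_nhdsWithin] with h hh
    exact (hV_int.sub (integrable_exp_neg_add_smul hV_int (le_of_lt hh))).const_mul _
  · filter_upwards [ae_differentiableAt_of_locallyLipschitz hV.locallyLipschitz] with w hw
    have := ((hasFDerivAt_exp_neg hw).neg.hasLineDerivAt w).tendsto_slope_zero_right
    simpa [mul_comm, neg_add_eq_sub] using this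

theorem integrable_fderiv_apply_mul_exp_neg (hV : ConvexOn ℝ univ V)
    (hV_int : Integrable (fun w => exp (-V w)) μ) (v : E) :
    Integrable (fun w => fderiv ℝ V w v * exp (-V w)) μ := by
  have hcont := hV.locallyLipschitz.continuous
  obtain ⟨m, hm⟩ := exists_forall_le_of_integrable_exp_neg hV hV_int
  refine ((integrable_fderiv_self_mul_exp_neg hV hV_int).add
    (hV_int.const_mul (|V v| + |V (-v)| - m))).mono' ?_ ?_
  · exact ((measurable_fderiv_apply_const ℝ V v).mul (by fun_prop)).aestronglyMeasurable
  · filter_upwards [ae_differentiableAt_of_locallyLipschitz hV.locallyLipschitz] with w hw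
    rw [Pi.add_apply, ← add_mul, norm_mul, Real.norm_of_nonneg (exp_nonneg _)]
    gcongr
    linarith [abs_fderiv_le_of_convexOn hV hw v, hm w, Real.norm_eq_abs (fderiv ℝ V w v)]

theorem mul_exp_neg_half_le {a b x y : ℝ} (ha : 0 < a) (hle : a * x ≤ y + b) :
    x * exp (-(y / 2)) ≤ 2 / a * exp (b / 2) := by
  have hx : x ≤ 2 / a * exp ((y + b) / 2) := by
    rw [div_mul_eq_mul_div, le_div_iff₀' ha]
    linarith [add_one_le_exp ((y + b) / 2)]
  calc x * exp (-(y / 2)) ≤ 2 / a * exp ((y + b) / 2) * exp (-(y / 2)) := by gcongr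
    _ = 2 / a * exp (b / 2) := by rw [mul_assoc, ← exp_add]; congr 2; ring

theorem integrable_mul_exp_neg_of_integrable_half (hV : ConvexOn ℝ univ V)
    (hV_int : Integrable (fun w => exp (-V w)) μ) (ℓ : E →L[ℝ] ℝ) {q : E → ℝ}
    (hq : Integrable (fun w => q w * exp (-(V w / 2))) μ) :
    Integrable (fun w => ℓ w * q w * exp (-V w)) μ := by
  have hcont := hV.locallyLipschitz.continuous
  obtain ⟨a, ha, b, hab⟩ := exists_forall_mul_norm_le_add_of_integrable_exp_neg hV hV_int
  have hbdd : ∀ w, ‖ℓ w * exp (-(V w / 2))‖ ≤ ‖ℓ‖ * (2 / a * exp (b / 2)) := fun w => by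
    rw [norm_mul, Real.norm_of_nonneg (exp_nonneg _)]
    calc ‖ℓ w‖ * exp (-(V w / 2)) ≤ ‖ℓ‖ * ‖w‖ * exp (-(V w / 2)) := by
          gcongr; exact ℓ.le_opNorm w
      _ ≤ ‖ℓ‖ * (2 / a * exp (b / 2)) := by
          rw [mul_assoc]; gcongr ?_ * ?_; exact mul_exp_neg_half_le ha (hab w)
  refine (hq.bdd_mul (by fun_prop) (ae_of_all _ hbdd)).congr (ae_of_all _ fun w => ?_)
  have hexp : exp (-V w) = exp (-(V w / 2)) * exp (-(V w / 2)) := by rw [← exp_add]; congr 1; ring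
  simp only [hexp]
  ring

theorem integrable_apply_mul_exp_neg (hV : ConvexOn ℝ univ V)
    (hV_int : Integrable (fun w => exp (-V w)) μ) (ℓ : E →L[ℝ] ℝ) :
    Integrable (fun w => ℓ w * exp (-V w)) μ := by
  simpa using integrable_mul_exp_neg_of_integrable_half hV hV_int ℓ (q := fun _ => 1)
    (by simpa using integrable_exp_neg_half hV hV_int)

theorem integrable_apply_mul_fderiv_apply_mul_exp_neg (hV : ConvexOn ℝ univ V)
    (hV_int : Integrable (fun w => exp (-V w)) μ) (ℓ : E →L[ℝ] ℝ) (v : E) :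
    Integrable (fun w => ℓ w * fderiv ℝ V w v * exp (-V w)) μ := by
  refine integrable_mul_exp_neg_of_integrable_half hV hV_int ℓ ?_
  have hsmul : (fun w => V w / 2) = (2 : ℝ)⁻¹ • V := by
    ext w; simp [div_eq_inv_mul]
  have hhalf : ConvexOn ℝ univ (fun w => V w / 2) := hsmul ▸ hV.smul (by norm_num)
  refine ((integrable_fderiv_apply_mul_exp_neg hhalf
    (integrable_exp_neg_half hV hV_int) v).const_mul 2).congr (ae_of_all _ fun w => ?_)
  simp [hsmul, fderiv_const_smul_field, ← mul_assoc]

theorem integral_apply_mul_fderiv_apply_mul_exp_neg (hV : ConvexOn ℝ univ V)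
    (hV_int : Integrable (fun w => exp (-V w)) μ) (ℓ : E →L[ℝ] ℝ) (v : E) :
    ∫ w, ℓ w * fderiv ℝ V w v * exp (-V w) ∂μ = ℓ v * ∫ w, exp (-V w) ∂μ := by
  have hsmooth : ContDiff ℝ 1 fun q : ℝ × ℝ => q.1 * exp (-q.2) := by fun_prop
  have hLip : LocallyLipschitz fun w => ℓ w * exp (-V w) :=
    hsmooth.locallyLipschitz.comp (ℓ.lipschitz.locallyLipschitz.prodMk hV.locallyLipschitz)
  have hae : (fun w => lineDeriv ℝ (fun w => ℓ w * exp (-V w)) w v) =ᵐ[μ]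
      fun w => ℓ v * exp (-V w) - ℓ w * fderiv ℝ V w v * exp (-V w) := by
    filter_upwards [ae_differentiableAt_of_locallyLipschitz hV.locallyLipschitz] with w hw
    refine ((ℓ.hasFDerivAt.mul (hasFDerivAt_exp_neg hw)).hasLineDerivAt v).lineDeriv.trans ?_
    simp only [smul_neg, add_apply, neg_apply, smul_apply, smul_eq_mul]
    ring
  have hleft := hV_int.const_mul (ℓ v)
  have hright := integrable_apply_mul_fderiv_apply_mul_exp_neg hV hV_int ℓ v
  have hzero := integral_lineDeriv_eq_zero_of_locallyLipschitz hLip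
    (integrable_apply_mul_exp_neg hV hV_int ℓ) ((hleft.sub hright).congr hae.symm)
  rw [integral_congr_ae hae, integral_sub hleft hright, integral_const_mul] at hzero
  linarith

theorem integral_fderiv_self_mul_exp_neg (hV : ConvexOn ℝ univ V)
    (hV_int : Integrable (fun w => exp (-V w)) μ) :
    ∫ w, fderiv ℝ V w w * exp (-V w) ∂μ = finrank ℝ E * ∫ w, exp (-V w) ∂μ := by
  set b := finBasis ℝ E
  set ℓ : Fin (finrank ℝ E) → E →L[ℝ] ℝ := fun i => (b.coord i).toContinuousLinearMap
  have hsum : ∀ w, fderiv ℝ V w w * exp (-V w) =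
      ∑ i, ℓ i w * fderiv ℝ V w (b i) * exp (-V w) := by
    intro w
    have hw := congrArg (fderiv ℝ V w) (b.sum_repr w)
    simp only [map_sum, map_smul, smul_eq_mul] at hw
    rw [← hw, Finset.sum_mul]
    rfl
  simp only [hsum]
  rw [integral_finsetSum _ fun i _ =>
    integrable_apply_mul_fderiv_apply_mul_exp_neg hV hV_int (ℓ i) (b i)]
  simp only [integral_apply_mul_fderiv_apply_mul_exp_neg hV hV_int]
  simp [ℓ]

end Gibbs

theorem gibbs_inner_grad_identity_general {E : Type*} [NormedAddCommGroup E] [NormedSpace ℝ E]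
    [FiniteDimensional ℝ E] [MeasurableSpace E] [BorelSpace E] {μ : Measure E}
    [μ.IsAddHaarMeasure] {G : E → ℝ} (hG : ConvexOn ℝ univ G) {c δ : ℝ} (hc : 0 < c) (hδ : 0 < δ)
    {ρ : Measure E} [IsProbabilityMeasure ρ]
    (hρ : ρ = μ.withDensity fun w => ENNReal.ofReal (c * exp (-G w / δ))) :
    (∀ᵐ w ∂μ, DifferentiableAt ℝ G w) ∧
    ∫ w, fderiv ℝ G w w ∂ρ = finrank ℝ E * δ ∧
    ∀ (ℓ : E →L[ℝ] ℝ) (v : E), ∫ w, ℓ w * fderiv ℝ G w v ∂ρ = ℓ v * δ := by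
  set V : E → ℝ := δ⁻¹ • G
  have hV : ConvexOn ℝ univ V := hG.smul (inv_nonneg.2 hδ.le)
  have hcont := hV.locallyLipschitz.continuous
  have hfderiv : ∀ w v, fderiv ℝ G w v = δ * fderiv ℝ V w v := fun w v => by
    have : fderiv ℝ V w = δ⁻¹ • fderiv ℝ G w := by
      rw [fderiv_const_smul_field, Pi.smul_apply]
    rw [this]
    simp [hδ.ne']
  have hρ_integral : ∀ φ : E → ℝ, ∫ w, φ w ∂ρ = c * ∫ w, φ w * exp (-V w) ∂μ := fun φ => by
    have hdens : ∀ w, -G w / δ = -V w := fun w => by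
      simp only [V, Pi.smul_apply, smul_eq_mul]; ring
    simp only [hdens] at hρ
    rw [hρ, integral_withDensity_ofReal (by fun_prop) (fun w => by positivity),
      ← integral_const_mul]
    simp only [smul_eq_mul, mul_left_comm, mul_comm]
  have hmass : c * ∫ w, exp (-V w) ∂μ = 1 := by simpa using (hρ_integral fun _ => 1).symm
  have hV_int : Integrable (fun w => exp (-V w)) μ :=
    .of_integral_ne_zero (right_ne_zero_of_mul_eq_one hmass)
  refine ⟨ae_differentiableAt_of_locallyLipschitz hG.locallyLipschitz, ?_, fun ℓ v => ?_⟩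
  · simp only [hρ_integral, hfderiv, mul_assoc, integral_const_mul,
      integral_fderiv_self_mul_exp_neg hV hV_int]
    linear_combination finrank ℝ E * δ * hmass
  · simp only [hρ_integral, hfderiv, mul_left_comm _ δ, mul_assoc δ, integral_const_mul,
      integral_apply_mul_fderiv_apply_mul_exp_neg hV hV_int]
    linear_combination ℓ v * δ * hmass

theorem convexOn_recentered_proximal_objective {E : Type*} [NormedAddCommGroup E]
    [NormedSpace ℝ E] {f : E → ℝ} (hf : ConvexOn ℝ univ f) {t : ℝ} (ht : 0 < t) (x z : E) :
    ConvexOn ℝ univ fun w =>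
      f (z + w) + ‖z + w - x‖ ^ 2 / (2 * t) - f z - ‖z - x‖ ^ 2 / (2 * t) := by
  have hsq : ConvexOn ℝ univ fun u => (2 * t)⁻¹ * dist u x ^ 2 :=
    ((convexOn_univ_dist x).pow (fun _ _ => dist_nonneg) 2).smul (by positivity)
  have hobj := ((hf.add hsq).translate_right z).add_const (-f z - ‖z - x‖ ^ 2 / (2 * t))
  refine hobj.congr fun w _ => ?_
  simp only [mul_inv_rev, dist_eq_norm, Pi.add_apply, Function.comp_apply]
  ring

/-- **Integration-by-parts identity for the recentered proximal objective.**
With `g(w) = φ_x(z* + w) − φ_x(z*)` and `W` distributed with density proportional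
to `exp(−g(w)/δ)`, `g` is differentiable a.e. and `E[⟨W, ∇g(W)⟩] = nδ`, with each
coordinate contributing `δ`. -/
theorem gibbs_inner_grad_identity (n : ℕ) (f : EuclideanSpace ℝ (Fin n) → ℝ)
    (hf : ConvexOn ℝ Set.univ f) (t δ : ℝ) (ht : 0 < t) (hδ : 0 < δ)
    (x zstar : EuclideanSpace ℝ (Fin n))
    (hz : IsMinOn (fun z => f z + ‖z - x‖ ^ 2 / (2 * t)) Set.univ zstar)
    (G : EuclideanSpace ℝ (Fin n) → ℝ)
    (hG : G = fun w => f (zstar + w) + ‖zstar + w - x‖ ^ 2 / (2 * t)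
      - f zstar - ‖zstar - x‖ ^ 2 / (2 * t))
    (c : ℝ) (hc : 0 < c)
    (ρ : Measure (EuclideanSpace ℝ (Fin n)))
    (hρ : ρ = volume.withDensity fun w => ENNReal.ofReal (c * Real.exp (-G w / δ)))
    (hprob : IsProbabilityMeasure ρ) :
    (∀ᵐ w : EuclideanSpace ℝ (Fin n), DifferentiableAt ℝ G w) ∧
    (∫ w, ⟪w, gradient G w⟫ ∂ρ = n * δ) ∧
    (∀ j : Fin n, ∫ w, w j * gradient G w j ∂ρ = δ) := by
  have hconv : ConvexOn ℝ univ G := hG ▸ convexOn_recentered_proximal_objective hf ht x zstar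
  obtain ⟨hdiff, hinner, hcoord⟩ := gibbs_inner_grad_identity_general hconv hc hδ hρ
  refine ⟨hdiff, ?_, fun j => ?_⟩
  · simpa using hinner
  · have hgrad : ∀ w, gradient G w j = fderiv ℝ G w (EuclideanSpace.single j 1) := fun w => by
      rw [← inner_gradient_left, real_inner_comm, EuclideanSpace.inner_single_left]
      simp
    simpa [hgrad] using hcoord (EuclideanSpace.proj j) (EuclideanSpace.single j 1)
end

section
/- Let f : ℝⁿ → ℝ be convex and L-Lipschitz, t > 0, δ > 0, x ∈ ℝⁿ. Let Z ~ N(x, tδ·Iₙ) and set w(z) = exp(−f(z)/δ). Then E[w(Z)²] / (E[w(Z)])² ≤ exp(2 L² t / δ). Equivalently, with q the density of N(x, tδ·Iₙ), π the density proportional to exp(−(f(z) + ‖z − x‖²/(2t))/δ), and r = π/q, one has ∫ r(z)² q(z) dz = ∫ r(z) π(z) dz ≤ exp(2 L² t / δ). -/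
open MeasureTheory Real
open scoped ENNReal NNReal Pointwise

/-! If `q` is the Gaussian density of variance `v` and `g` is `K`-Lipschitz, the parallelogram
law gives `q x * q y = exp (-‖x - y‖² / (4v)) * q m ^ 2` at the midpoint `m` of `x` and `y`,
while `2 g x ≤ 2 g m + K ‖x - y‖`. Since `K d - d² / (4v) ≤ K² v`, the functions `exp (2 g) q`, `q`
and `exp (K² v / 2) exp (g) q` satisfy the hypothesis of the Prékopa–Leindler inequality with
weights `1/2`, `1/2`, whose conclusion is `E[exp (2 g)] ≤ exp (K² v) E[exp g]²`. -/

lemma volume_add_volume_le_volume_add_of_isCompact {K J : Set ℝ} (hK : IsCompact K)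
    (hJ : IsCompact J) (hK₀ : K.Nonempty) (hJ₀ : J.Nonempty) :
    volume K + volume J ≤ volume (K + J) := by
  obtain ⟨k, hkK, hk⟩ := hK.exists_isGreatest hK₀
  obtain ⟨j, hjJ, hj⟩ := hJ.exists_isLeast hJ₀
  have hdisj : AEDisjoint volume (j +ᵥ K) (k +ᵥ J) := by
    refine measure_mono_null (t := {j + k}) ?_ (measure_singleton _)
    rintro _ ⟨⟨a, ha, rfl⟩, ⟨b, hb, hab⟩⟩
    simp only [vadd_eq_add, Set.mem_singleton_iff] at hab ⊢
    linarith [hk ha, hj hb]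
  calc volume K + volume J = volume (j +ᵥ K) + volume (k +ᵥ J) := by simp only [measure_vadd]
    _ = volume ((j +ᵥ K) ∪ (k +ᵥ J)) :=
      (measure_union₀ (hJ.vadd k).measurableSet.nullMeasurableSet hdisj).symm
    _ ≤ volume (K + J) := by
      refine measure_mono (Set.union_subset ?_ ?_)
      · rw [add_comm K J]; exact Set.vadd_set_subset_add hjJ
      · exact Set.vadd_set_subset_add hkK

lemma volume_add_volume_le_volume_add {A B : Set ℝ} (hA : MeasurableSet A)
    (hB : MeasurableSet B) (hA₀ : A.Nonempty) (hB₀ : B.Nonempty) :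
    volume A + volume B ≤ volume (A + B) := by
  obtain ⟨a, ha⟩ := hA₀
  obtain ⟨b, hb⟩ := hB₀
  rw [hA.measure_eq_iSup_isCompact, hB.measure_eq_iSup_isCompact]
  simp only [iSup_and']
  refine ENNReal.biSup_add_biSup_le' ⟨∅, by simp⟩ ⟨∅, by simp⟩ ?_
  rintro K ⟨hKA, hK⟩ J ⟨hJB, hJ⟩
  calc volume K + volume J ≤ volume (insert a K) + volume (insert b J) := by
        gcongr <;> exact Set.subset_insert _ _
    _ ≤ volume (insert a K + insert b J) :=
      volume_add_volume_le_volume_add_of_isCompact (hK.insert a) (hJ.insert b)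
        (Set.insert_nonempty _ _) (Set.insert_nonempty _ _)
    _ ≤ volume (A + B) := by
      gcongr
      exacts [Set.insert_subset ha hKA, Set.insert_subset hb hJB]

lemma lintegral_eq_lintegral_meas_ofReal_lt {α : Type*} [MeasurableSpace α] (μ : Measure α)
    {f : α → ℝ≥0∞} (hf : AEMeasurable f μ) :
    ∫⁻ x, f x ∂μ = ∫⁻ t in Set.Ioi (0 : ℝ), μ {x | ENNReal.ofReal t < f x} := by
  by_cases hfin : ∀ᵐ x ∂μ, f x ≠ ∞
  · calc ∫⁻ x, f x ∂μ = ∫⁻ x, ENNReal.ofReal (f x).toReal ∂μ :=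
          lintegral_congr_ae (hfin.mono fun x hx => (ENNReal.ofReal_toReal hx).symm)
      _ = ∫⁻ t in Set.Ioi (0 : ℝ), μ {x | t < (f x).toReal} :=
        lintegral_eq_lintegral_meas_lt μ (.of_forall fun _ => ENNReal.toReal_nonneg)
          hf.ennreal_toReal
      _ = _ := by
        refine setLIntegral_congr_fun measurableSet_Ioi fun t ht => measure_congr ?_
        filter_upwards [hfin] with x hx
        exact propext (ENNReal.ofReal_lt_iff_lt_toReal (le_of_lt ht) hx).symm
  · have hμ : μ {x | f x = ∞} ≠ 0 := by simpa [ae_iff] using hfin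
    have htail : ∞ ≤ ∫⁻ t in Set.Ioi (0 : ℝ), μ {x | ENNReal.ofReal t < f x} :=
      calc ∞ = ∫⁻ _ in Set.Ioi (0 : ℝ), μ {x | f x = ∞} := by simp [ENNReal.mul_top hμ]
        _ ≤ _ := lintegral_mono fun t => measure_mono fun x (hx : f x = ∞) => by simp [hx]
    rw [top_le_iff.1 htail]
    by_contra h
    exact hfin ((ae_lt_top' hf h).mono fun x hx => hx.ne)

lemma lintegral_eq_iSup_lintegral_min_natCast {α : Type*} [MeasurableSpace α] (μ : Measure α)
    {f : α → ℝ≥0∞} (hf : Measurable f) :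
    ∫⁻ x, f x ∂μ = ⨆ n : ℕ, ∫⁻ x, min (f x) n ∂μ := by
  rw [← lintegral_iSup (fun n => hf.min measurable_const)
    (fun m n hmn x => min_le_min_left _ (Nat.cast_le.2 hmn))]
  refine lintegral_congr fun x => ?_
  change f x = ⨆ n : ℕ, f x ⊓ n
  rw [← inf_iSup_eq, ENNReal.iSup_natCast, inf_top_eq]

lemma ennreal_geom_mean_le_arith_mean2_weighted {r s : ℝ} (hr : 0 < r) (hs : 0 < s)
    (hrs : r + s = 1) (a b : ℝ≥0∞) :
    a ^ r * b ^ s ≤ ENNReal.ofReal r * a + ENNReal.ofReal s * b := by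
  have h := ENNReal.young_inequality (a ^ r) (b ^ s) (Real.HolderConjugate.inv_inv hr hs hrs)
  simpa [← ENNReal.rpow_mul, hr.ne', hs.ne', ENNReal.ofReal_inv_of_pos, hr, hs, div_eq_mul_inv,
    mul_comm] using h

/-- A measure `μ` satisfies the Prékopa–Leindler inequality with weights `r`, `s`; the usual case is
`r = 1 - λ`, `s = λ`. It is a property of the measure so that it can be tensorized. -/
def PrekopaLeindler {E : Type*} [AddCommMonoid E] [Module ℝ E] [MeasurableSpace E]
    (μ : Measure E) (r s : ℝ) : Prop :=
  ∀ ⦃f g h : E → ℝ≥0∞⦄, Measurable f → Measurable g → Measurable h →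
    (∀ x y, f x ^ r * g y ^ s ≤ h (r • x + s • y)) →
    (∫⁻ x, f x ∂μ) ^ r * (∫⁻ x, g x ∂μ) ^ s ≤ ∫⁻ x, h x ∂μ

section Real

variable {r s : ℝ} {f g h : ℝ → ℝ≥0∞}

lemma ofReal_mul_volume_add_le_volume_superlevel (hr : 0 < r) (hs : 0 < s) (hrs : r + s = 1)
    (hf : Measurable f) (hg : Measurable g) (hfgh : ∀ x y, f x ^ r * g y ^ s ≤ h (r * x + s * y))
    {c : ℝ≥0∞} (hfc : ∃ x, c < f x) (hgc : ∃ x, c < g x) :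
    ENNReal.ofReal r * volume {x | c < f x} + ENNReal.ofReal s * volume {x | c < g x} ≤
      volume {x | c < h x} := by
  calc ENNReal.ofReal r * volume {x | c < f x} + ENNReal.ofReal s * volume {x | c < g x}
      = volume (r • {x | c < f x}) + volume (s • {x | c < g x}) := by
        simp only [Measure.addHaar_smul_of_nonneg _ hr.le, Measure.addHaar_smul_of_nonneg _ hs.le,
          Module.finrank_self, pow_one]
    _ ≤ volume (r • {x | c < f x} + s • {x | c < g x}) :=
      volume_add_volume_le_volume_add ((measurableSet_lt measurable_const hf).const_smul₀ r)
        ((measurableSet_lt measurable_const hg).const_smul₀ s)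
        (Set.Nonempty.smul_set hfc) (Set.Nonempty.smul_set hgc)
    _ ≤ volume {x | c < h x} := by
      refine measure_mono ?_
      rintro _ ⟨_, ⟨x, hx, rfl⟩, _, ⟨y, hy, rfl⟩, rfl⟩
      calc c = c ^ r * c ^ s := by
            rw [← ENNReal.rpow_add_of_nonneg _ _ hr.le hs.le, hrs, ENNReal.rpow_one]
        _ < f x ^ r * g y ^ s :=
          ENNReal.mul_lt_mul (ENNReal.rpow_lt_rpow hx hr) (ENNReal.rpow_lt_rpow hy hs)
        _ ≤ h (r * x + s * y) := hfgh x y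

lemma ofReal_mul_lintegral_add_le_lintegral_of_iSup_eq (hr : 0 < r) (hs : 0 < s) (hrs : r + s = 1)
    (hf : Measurable f) (hg : Measurable g) (hh : Measurable h)
    (hfgh : ∀ x y, f x ^ r * g y ^ s ≤ h (r * x + s * y)) (hfg : ⨆ x, f x = ⨆ x, g x) :
    ENNReal.ofReal r * (∫⁻ x, f x) + ENNReal.ofReal s * (∫⁻ x, g x) ≤ ∫⁻ x, h x := by
  have measurable_meas (k : ℝ → ℝ≥0∞) :
      Measurable fun t : ℝ => volume {x | ENNReal.ofReal t < k x} :=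
    Antitone.measurable fun a b hab => measure_mono fun x hx =>
      (ENNReal.ofReal_le_ofReal hab).trans_lt hx
  rw [lintegral_eq_lintegral_meas_ofReal_lt volume hf.aemeasurable,
    lintegral_eq_lintegral_meas_ofReal_lt volume hg.aemeasurable,
    lintegral_eq_lintegral_meas_ofReal_lt volume hh.aemeasurable,
    ← lintegral_const_mul _ (measurable_meas f), ← lintegral_const_mul _ (measurable_meas g),
    ← lintegral_add_left ((measurable_meas f).const_mul _)]
  refine lintegral_mono fun t => ?_
  -- Since the suprema agree, the superlevel sets of `f` and `g` become empty at the same height.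
  rcases lt_or_ge (ENNReal.ofReal t) (⨆ x, f x) with ht | ht
  · exact ofReal_mul_volume_add_le_volume_superlevel hr hs hrs hf hg hfgh
      (lt_iSup_iff.1 ht) (lt_iSup_iff.1 (hfg ▸ ht))
  · have hft : {x | ENNReal.ofReal t < f x} = ∅ :=
      Set.eq_empty_of_forall_notMem fun x => ((le_iSup f x).trans ht).not_gt
    have hgt : {x | ENNReal.ofReal t < g x} = ∅ :=
      Set.eq_empty_of_forall_notMem fun x => ((le_iSup g x).trans (hfg ▸ ht)).not_gt
    simp [hft, hgt]

lemma rpow_lintegral_mul_le_lintegral_of_iSup_ne_top (hr : 0 < r) (hs : 0 < s) (hrs : r + s = 1)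
    (hf : Measurable f) (hg : Measurable g) (hh : Measurable h)
    (hfgh : ∀ x y, f x ^ r * g y ^ s ≤ h (r * x + s * y))
    (hf_top : ⨆ x, f x ≠ ∞) (hg_top : ⨆ x, g x ≠ ∞) :
    (∫⁻ x, f x) ^ r * (∫⁻ x, g x) ^ s ≤ ∫⁻ x, h x := by
  rcases eq_or_ne (⨆ x, f x) 0 with hf₀ | hf₀
  · simp [ENNReal.iSup_eq_zero.1 hf₀, hr]
  rcases eq_or_ne (⨆ x, g x) 0 with hg₀ | hg₀
  · simp [ENNReal.iSup_eq_zero.1 hg₀, hs]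
  set α := ⨆ x, f x
  set β := ⨆ x, g x
  have scale (a b : ℝ≥0∞) :
      (α⁻¹ * a) ^ r * (β⁻¹ * b) ^ s = (α ^ r * β ^ s)⁻¹ * (a ^ r * b ^ s) := by
    rw [ENNReal.mul_rpow_of_nonneg _ _ hr.le, ENNReal.mul_rpow_of_nonneg _ _ hs.le,
      ENNReal.inv_rpow, ENNReal.inv_rpow,
      ENNReal.mul_inv (.inr (by finiteness)) (.inl (by finiteness))]
    ring
  have hsup : ⨆ x, α⁻¹ * f x = ⨆ x, β⁻¹ * g x := by
    rw [← ENNReal.mul_iSup, ← ENNReal.mul_iSup, ENNReal.inv_mul_cancel hf₀ hf_top,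
      ENNReal.inv_mul_cancel hg₀ hg_top]
  have hscaled : (α ^ r * β ^ s)⁻¹ * ((∫⁻ x, f x) ^ r * (∫⁻ x, g x) ^ s) ≤
      (α ^ r * β ^ s)⁻¹ * ∫⁻ x, h x :=
    calc (α ^ r * β ^ s)⁻¹ * ((∫⁻ x, f x) ^ r * (∫⁻ x, g x) ^ s)
        = (∫⁻ x, α⁻¹ * f x) ^ r * (∫⁻ x, β⁻¹ * g x) ^ s := by
          rw [lintegral_const_mul _ hf, lintegral_const_mul _ hg, scale]
      _ ≤ ENNReal.ofReal r * (∫⁻ x, α⁻¹ * f x) + ENNReal.ofReal s * (∫⁻ x, β⁻¹ * g x) :=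
        ennreal_geom_mean_le_arith_mean2_weighted hr hs hrs _ _
      _ ≤ ∫⁻ x, (α ^ r * β ^ s)⁻¹ * h x :=
        ofReal_mul_lintegral_add_le_lintegral_of_iSup_eq hr hs hrs (hf.const_mul _) (hg.const_mul _)
          (hh.const_mul _) (fun x y => by rw [scale]; gcongr; exact hfgh x y) hsup
      _ = (α ^ r * β ^ s)⁻¹ * ∫⁻ x, h x := lintegral_const_mul _ hh
  exact (ENNReal.mul_le_mul_iff_right (ENNReal.inv_ne_zero.2 (by finiteness))
    (ENNReal.inv_ne_top.2 (by positivity))).1 hscaled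

lemma prekopaLeindler_volume_real (hr : 0 < r) (hs : 0 < s) (hrs : r + s = 1) :
    PrekopaLeindler (volume : Measure ℝ) r s := by
  intro f g h hf hg hh hfgh
  have min_top (k : ℝ → ℝ≥0∞) (n : ℕ) : ⨆ x, min (k x) n ≠ ∞ :=
    ne_top_of_le_ne_top (ENNReal.natCast_ne_top n) (iSup_le fun x => min_le_right _ _)
  have truncated (n : ℕ) :
      (∫⁻ x, min (f x) n) ^ r * (∫⁻ x, min (g x) n) ^ s ≤ ∫⁻ x, h x :=
    rpow_lintegral_mul_le_lintegral_of_iSup_ne_top hr hs hrs (hf.min measurable_const)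
      (hg.min measurable_const) hh
      (fun x y => le_trans (by gcongr <;> exact min_le_left _ _) (hfgh x y))
      (min_top f n) (min_top g n)
  have mono (k : ℝ → ℝ≥0∞) {p : ℝ} (hp : 0 < p) :
      Monotone fun n : ℕ => (∫⁻ x, min (k x) n) ^ p := fun m n hmn => by
    dsimp only; gcongr
  have iSup_rpow (k : ℝ → ℝ≥0∞) (hk : Measurable k) {p : ℝ} (hp : 0 < p) :
      (∫⁻ x, k x) ^ p = ⨆ n : ℕ, (∫⁻ x, min (k x) n) ^ p := by
    rw [lintegral_eq_iSup_lintegral_min_natCast _ hk]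
    exact (ENNReal.orderIsoRpow p hp).map_iSup _
  rw [iSup_rpow f hf hr, iSup_rpow g hg hs]
  simp only [ENNReal.iSup_mul, ENNReal.mul_iSup]
  refine iSup₂_le fun n m => ?_
  exact (mul_le_mul' (mono f hr (le_max_left m n)) (mono g hs (le_max_right m n))).trans
    (truncated (max m n))

end Real

namespace PrekopaLeindler

variable {E F : Type*} [AddCommMonoid E] [Module ℝ E] [MeasurableSpace E]
  [AddCommMonoid F] [Module ℝ F] [MeasurableSpace F] {μ : Measure E} {ν : Measure F} {r s : ℝ}

lemma prod [SFinite ν] (hμ : PrekopaLeindler μ r s) (hν : PrekopaLeindler ν r s) :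
    PrekopaLeindler (μ.prod ν) r s := by
  intro f g h hf hg hh hfgh
  rw [lintegral_prod _ hf.aemeasurable, lintegral_prod _ hg.aemeasurable,
    lintegral_prod _ hh.aemeasurable]
  refine hμ hf.lintegral_prod_right' hg.lintegral_prod_right' hh.lintegral_prod_right' fun x y => ?_
  exact hν (by fun_prop) (by fun_prop) (by fun_prop) fun x' y' => hfgh (x, x') (y, y')

lemma map (hμ : PrekopaLeindler μ r s) {e : E →ₗ[ℝ] F} (he : Measurable e) :
    PrekopaLeindler (μ.map e) r s := by
  intro f g h hf hg hh hfgh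
  rw [lintegral_map hf he, lintegral_map hg he, lintegral_map hh he]
  exact hμ (hf.comp he) (hg.comp he) (hh.comp he) fun x y => by simpa using hfgh (e x) (e y)

lemma smul (hμ : PrekopaLeindler μ r s) (hr : 0 ≤ r) (hs : 0 ≤ s) (hrs : r + s = 1) (c : ℝ≥0∞) :
    PrekopaLeindler (c • μ) r s := by
  intro f g h hf hg hh hfgh
  simp only [lintegral_smul_measure, smul_eq_mul]
  calc (c * ∫⁻ x, f x ∂μ) ^ r * (c * ∫⁻ x, g x ∂μ) ^ s
      = c ^ (r + s) * ((∫⁻ x, f x ∂μ) ^ r * (∫⁻ x, g x ∂μ) ^ s) := by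
        rw [ENNReal.mul_rpow_of_nonneg _ _ hr, ENNReal.mul_rpow_of_nonneg _ _ hs,
          ENNReal.rpow_add_of_nonneg _ _ hr hs]
        ring
    _ ≤ c * ∫⁻ x, h x ∂μ := by
      rw [hrs, ENNReal.rpow_one]
      gcongr
      exact hμ hf hg hh hfgh

lemma dirac (hrs : r + s = 1) (a : E) : PrekopaLeindler (Measure.dirac a) r s := by
  intro f g h hf hg hh hfgh
  rw [lintegral_dirac' _ hf, lintegral_dirac' _ hg, lintegral_dirac' _ hh]
  simpa only [← add_smul, hrs, one_smul] using hfgh a a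

lemma pi {n : ℕ} {E : Fin n → Type*} [∀ i, AddCommMonoid (E i)] [∀ i, Module ℝ (E i)]
    [∀ i, MeasurableSpace (E i)] {μ : ∀ i, Measure (E i)} [∀ i, SigmaFinite (μ i)]
    (hrs : r + s = 1) (hμ : ∀ i, PrekopaLeindler (μ i) r s) :
    PrekopaLeindler (Measure.pi μ) r s := by
  induction n with
  | zero => rw [Measure.pi_of_empty μ]; exact dirac hrs _
  | succ n ih =>
    have hcons := (measurePreserving_piFinSuccAbove μ 0).symm
    have hprod := (hμ 0).prod (ih fun i => hμ i.succ)
    rw [← hcons.map_eq]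
    have hcoe : ⇑(MeasurableEquiv.piFinSuccAbove E 0).symm = Fin.consLinearEquiv ℝ E :=
      funext fun p => Fin.insertNth_zero p.1 p.2
    rw [hcoe] at hcons ⊢
    exact hprod.map (e := (Fin.consLinearEquiv ℝ E).toLinearMap) hcons.measurable

lemma lintegral_mul_lintegral_le_sq {E : Type*} [AddCommGroup E] [Module ℝ E] [MeasurableSpace E]
    {μ : Measure E} (hμ : PrekopaLeindler μ (1 / 2) (1 / 2)) {f g h : E → ℝ≥0∞}
    (hf : Measurable f) (hg : Measurable g) (hh : Measurable h)
    (hfgh : ∀ x y, f x * g y ≤ h (midpoint ℝ x y) ^ 2) :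
    (∫⁻ x, f x ∂μ) * (∫⁻ x, g x ∂μ) ≤ (∫⁻ x, h x ∂μ) ^ 2 := by
  have rpow_half_le {a b : ℝ≥0∞} : a ^ (1 / 2 : ℝ) ≤ b ↔ a ≤ b ^ 2 := by
    rw [one_div, ENNReal.rpow_inv_le_iff two_pos, ENNReal.rpow_two]
  have h_sqrt := hμ hf hg hh fun x y => by
    rw [← ENNReal.mul_rpow_of_nonneg _ _ one_half_pos.le, rpow_half_le, ← smul_add, one_div,
      ← invOf_eq_inv, ← midpoint_eq_smul_add]
    exact hfgh x y
  rwa [← ENNReal.mul_rpow_of_nonneg _ _ one_half_pos.le, rpow_half_le] at h_sqrt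

end PrekopaLeindler

theorem prekopaLeindler_of_isAddHaarMeasure {E : Type*} [NormedAddCommGroup E] [NormedSpace ℝ E]
    [FiniteDimensional ℝ E] [MeasurableSpace E] [BorelSpace E] (μ : Measure E) [μ.IsAddHaarMeasure]
    {r s : ℝ} (hr : 0 < r) (hs : 0 < s) (hrs : r + s = 1) : PrekopaLeindler μ r s := by
  let e : (Fin (Module.finrank ℝ E) → ℝ) ≃L[ℝ] E := .ofFinrankEq (by simp)
  have he : PrekopaLeindler (volume.map e) r s :=
    (PrekopaLeindler.pi hrs fun _ => prekopaLeindler_volume_real hr hs hrs).map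
      (e := e.toLinearEquiv.toLinearMap) e.continuous.measurable
  have : (volume.map e).IsAddHaarMeasure := e.isAddHaarMeasure_map volume
  rw [Measure.isAddLeftInvariant_eq_smul μ (volume.map e)]
  exact he.smul hr.le hs.le hrs _

/-- `q` is midpoint log-concave with a quadratic gain of strength `v⁻¹`: this is what strong
log-concavity `-∇² log q ≥ v⁻¹ • 1` gives at midpoints, stated without derivatives or positivity. -/
def IsMidpointStronglyLogConcave {E : Type*} [NormedAddCommGroup E] [NormedSpace ℝ E]
    (q : E → ℝ) (v : ℝ) : Prop :=
  ∀ x y, q x * q y ≤ rexp (-(‖x - y‖ ^ 2 / (4 * v))) * q (midpoint ℝ x y) ^ 2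

namespace IsMidpointStronglyLogConcave

variable {E : Type*} [NormedAddCommGroup E] [NormedSpace ℝ E] {q g : E → ℝ} {v : ℝ} {K : ℝ≥0}

lemma exp_sq_mul_mul_le (hq : IsMidpointStronglyLogConcave q v) (hv : 0 < v)
    (hg : LipschitzWith K g) (x y : E) :
    rexp (g x) ^ 2 * q x * q y ≤
      rexp (K ^ 2 * v) * (rexp (g (midpoint ℝ x y)) * q (midpoint ℝ x y)) ^ 2 := by
  set m := midpoint ℝ x y
  have hgx : g x ≤ g m + K * (‖x - y‖ / 2) := by
    have := (le_abs_self _).trans (hg.dist_le_mul x m)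
    rw [dist_left_midpoint, dist_eq_norm, Real.norm_two] at this
    linarith
  have hquad : K * ‖x - y‖ - ‖x - y‖ ^ 2 / (4 * v) ≤ K ^ 2 * v := by
    have hsquare : K ^ 2 * v - (K * ‖x - y‖ - ‖x - y‖ ^ 2 / (4 * v)) =
        (‖x - y‖ - 2 * K * v) ^ 2 / (4 * v) := by field_simp; ring
    have : 0 ≤ (‖x - y‖ - 2 * K * v) ^ 2 / (4 * v) := by positivity
    linarith
  calc rexp (g x) ^ 2 * q x * q y = rexp (2 * g x) * (q x * q y) := by
        rw [two_mul, Real.exp_add]; ring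
    _ ≤ rexp (2 * g x) * (rexp (-(‖x - y‖ ^ 2 / (4 * v))) * q m ^ 2) :=
        mul_le_mul_of_nonneg_left (hq x y) (Real.exp_nonneg _)
    _ = rexp (2 * g x - ‖x - y‖ ^ 2 / (4 * v)) * q m ^ 2 := by
        rw [← mul_assoc, ← Real.exp_add, ← sub_eq_add_neg]
    _ ≤ rexp (K ^ 2 * v + 2 * g m) * q m ^ 2 := by gcongr; linarith
    _ = rexp (K ^ 2 * v) * (rexp (g m) * q m) ^ 2 := by
        rw [Real.exp_add, two_mul, Real.exp_add]; ring

lemma lintegral_exp_sq_mul_lintegral_le [MeasurableSpace E] [BorelSpace E] {μ : Measure E}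
    (hq : IsMidpointStronglyLogConcave q v) (hv : 0 < v) (hg : LipschitzWith K g)
    (hq₀ : ∀ z, 0 ≤ q z) (hqm : Measurable q) (hμ : PrekopaLeindler μ (1 / 2) (1 / 2)) :
    (∫⁻ z, ENNReal.ofReal (rexp (g z) ^ 2 * q z) ∂μ) * ∫⁻ z, ENNReal.ofReal (q z) ∂μ ≤
      ENNReal.ofReal (rexp (K ^ 2 * v)) *
        (∫⁻ z, ENNReal.ofReal (rexp (g z) * q z) ∂μ) ^ 2 := by
  have hgm : Measurable g := hg.continuous.measurable
  have sqrt_exp_sq : rexp (K ^ 2 * v / 2) ^ 2 = rexp (K ^ 2 * v) := by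
    rw [← Real.exp_nat_mul]; congr 1; push_cast; ring
  calc (∫⁻ z, ENNReal.ofReal (rexp (g z) ^ 2 * q z) ∂μ) * ∫⁻ z, ENNReal.ofReal (q z) ∂μ
      ≤ (∫⁻ z, ENNReal.ofReal (rexp (K ^ 2 * v / 2)) *
          ENNReal.ofReal (rexp (g z) * q z) ∂μ) ^ 2 := by
        refine hμ.lintegral_mul_lintegral_le_sq (by fun_prop) (by fun_prop) (by fun_prop)
          fun x y => ?_
        rw [← ENNReal.ofReal_mul (mul_nonneg (sq_nonneg _) (hq₀ x)), mul_pow,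
          ← ENNReal.ofReal_pow (Real.exp_nonneg _), sqrt_exp_sq,
          ← ENNReal.ofReal_pow (mul_nonneg (Real.exp_nonneg _) (hq₀ _)),
          ← ENNReal.ofReal_mul (Real.exp_nonneg _)]
        exact ENNReal.ofReal_le_ofReal (hq.exp_sq_mul_mul_le hv hg x y)
    _ = ENNReal.ofReal (rexp (K ^ 2 * v)) *
          (∫⁻ z, ENNReal.ofReal (rexp (g z) * q z) ∂μ) ^ 2 := by
        rw [lintegral_const_mul _ (by fun_prop), mul_pow, ← ENNReal.ofReal_pow (Real.exp_nonneg _),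
          sqrt_exp_sq]

lemma integral_exp_sq_div_le [MeasurableSpace E] [BorelSpace E] {μ : Measure E}
    (hq : IsMidpointStronglyLogConcave q v) (hv : 0 < v) (hg : LipschitzWith K g)
    (hq₀ : ∀ z, 0 ≤ q z) (hqm : Measurable q) (hq₁ : ∫ z, q z ∂μ = 1)
    (hμ : PrekopaLeindler μ (1 / 2) (1 / 2)) :
    (∫ z, rexp (g z) ^ 2 * q z ∂μ) / (∫ z, rexp (g z) * q z ∂μ) ^ 2 ≤ rexp (K ^ 2 * v) := by
  have hgm : Measurable g := hg.continuous.measurable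
  have hmass : ∫⁻ z, ENNReal.ofReal (q z) ∂μ = 1 := by
    rw [← ofReal_integral_eq_lintegral_ofReal
      (.of_integral_ne_zero (by rw [hq₁]; exact one_ne_zero)) (.of_forall hq₀), hq₁,
      ENNReal.ofReal_one]
  have hmoments := hq.lintegral_exp_sq_mul_lintegral_le hv hg hq₀ hqm hμ
  rw [hmass, mul_one] at hmoments
  rw [integral_eq_lintegral_of_nonneg_ae
      (.of_forall fun z => mul_nonneg (sq_nonneg _) (hq₀ z)) (by fun_prop),
    integral_eq_lintegral_of_nonneg_ae
      (.of_forall fun z => mul_nonneg (Real.exp_nonneg _) (hq₀ z)) (by fun_prop),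
    ← ENNReal.toReal_pow, ← ENNReal.toReal_div]
  exact ENNReal.toReal_le_of_le_ofReal (Real.exp_nonneg _) (ENNReal.div_le_of_le_mul hmoments)

end IsMidpointStronglyLogConcave

/-- The density of the Gaussian `N(x, v • 1)`, the analogue of `ProbabilityTheory.gaussianPDFReal`
on a finite-dimensional inner product space. -/
noncomputable def isotropicGaussianPDFReal {E : Type*} [NormedAddCommGroup E]
    [InnerProductSpace ℝ E] (x : E) (v : ℝ) (z : E) : ℝ :=
  (2 * π * v) ^ (-(Module.finrank ℝ E : ℝ) / 2) * rexp (-‖z - x‖ ^ 2 / (2 * v))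

section Gaussian

variable {E : Type*} [NormedAddCommGroup E] [InnerProductSpace ℝ E] {v : ℝ}

lemma isotropicGaussianPDFReal_nonneg (hv : 0 ≤ v) (x z : E) :
    0 ≤ isotropicGaussianPDFReal x v z := by
  unfold isotropicGaussianPDFReal; positivity

lemma continuous_isotropicGaussianPDFReal (x : E) (v : ℝ) :
    Continuous (isotropicGaussianPDFReal x v) := by
  unfold isotropicGaussianPDFReal; fun_prop

lemma integral_isotropicGaussianPDFReal [FiniteDimensional ℝ E] [MeasurableSpace E] [BorelSpace E]
    (hv : 0 < v) (x : E) : ∫ z, isotropicGaussianPDFReal x v z = 1 := by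
  have hgauss : ∫ z : E, rexp (-‖z‖ ^ 2 / (2 * v)) =
      (2 * π * v) ^ ((Module.finrank ℝ E : ℝ) / 2) := by
    convert GaussianFourier.integral_rexp_neg_mul_sq_norm (V := E) (b := (2 * v)⁻¹)
      (by positivity) using 3 <;> field_simp
  simp only [isotropicGaussianPDFReal]
  rw [integral_const_mul, integral_sub_right_eq_self (fun z : E => rexp (-‖z‖ ^ 2 / (2 * v))) x,
    hgauss, ← Real.rpow_add (by positivity), neg_div, neg_add_cancel, Real.rpow_zero]

lemma isMidpointStronglyLogConcave_isotropicGaussianPDFReal (hv : v ≠ 0) (x : E) :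
    IsMidpointStronglyLogConcave (isotropicGaussianPDFReal x v) v := by
  intro y z
  have apollonius :
      ‖y - x‖ ^ 2 + ‖z - x‖ ^ 2 = 2 * (‖midpoint ℝ y z - x‖ ^ 2 + (‖y - z‖ / 2) ^ 2) := by
    simpa only [dist_comm x, dist_eq_norm] using
      EuclideanGeometry.dist_sq_add_dist_sq_eq_two_mul_dist_midpoint_sq_add_half_dist_sq x y z
  have hexponent : -‖y - x‖ ^ 2 / (2 * v) + -‖z - x‖ ^ 2 / (2 * v) =
      -(‖y - z‖ ^ 2 / (4 * v)) + 2 * (-‖midpoint ℝ y z - x‖ ^ 2 / (2 * v)) := by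
    field_simp
    linear_combination -4 * apollonius
  simp only [isotropicGaussianPDFReal]
  rw [mul_mul_mul_comm, ← Real.exp_add, hexponent, Real.exp_add,
    two_mul (-‖midpoint ℝ y z - x‖ ^ 2 / _), Real.exp_add]
  exact le_of_eq (by ring)

end Gaussian

theorem importance_weight_ratio_bound_general {E : Type*} [NormedAddCommGroup E]
    [InnerProductSpace ℝ E] [FiniteDimensional ℝ E] [MeasurableSpace E] [BorelSpace E] {f : E → ℝ}
    {L : ℝ} (hL : ∀ y z, |f y - f z| ≤ L * ‖y - z‖) {t δ : ℝ} (ht : 0 < t) (hδ : 0 < δ) (x : E) :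
    (∫ z, rexp (-f z / δ) ^ 2 * isotropicGaussianPDFReal x (t * δ) z) /
      (∫ z, rexp (-f z / δ) * isotropicGaussianPDFReal x (t * δ) z) ^ 2 ≤
        rexp (L ^ 2 * t / δ) := by
  have hg : LipschitzWith ‖L / δ‖₊ fun z => -f z / δ := LipschitzWith.of_dist_le_mul fun y z =>
    calc dist (-f y / δ) (-f z / δ) = |f y - f z| / δ := by
          rw [Real.dist_eq, ← sub_div, abs_div, abs_of_pos hδ, neg_sub_neg, abs_sub_comm]
      _ ≤ L * ‖y - z‖ / δ := by gcongr; exact hL y z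
      _ = L / δ * dist y z := by rw [dist_eq_norm]; ring
      _ ≤ ‖L / δ‖₊ * dist y z := by gcongr; exact le_abs_self _
  have hv : 0 < t * δ := mul_pos ht hδ
  have hexponent : (‖L / δ‖₊ : ℝ) ^ 2 * (t * δ) = L ^ 2 * t / δ := by
    rw [coe_nnnorm, Real.norm_eq_abs, sq_abs]; field_simp
  rw [← hexponent]
  exact (isMidpointStronglyLogConcave_isotropicGaussianPDFReal hv.ne' x).integral_exp_sq_div_le hv
    hg (isotropicGaussianPDFReal_nonneg hv.le x)
    (continuous_isotropicGaussianPDFReal x _).measurable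
    (integral_isotropicGaussianPDFReal hv x)
    (prekopaLeindler_of_isAddHaarMeasure volume one_half_pos one_half_pos (add_halves 1))

/-- **Bound on the importance-weight second moment (Lemma "Bound on E_q[r(Z)²]").**
For convex `L`-Lipschitz `f` and `Z ~ N(x, tδ Iₙ)` with `w(z) = exp(−f(z)/δ)`,
`E[w(Z)²] / (E[w(Z)])² ≤ exp(2 L² t / δ)`. -/
theorem importance_weight_ratio_bound (n : ℕ) (f : EuclideanSpace ℝ (Fin n) → ℝ)
    (hf : ConvexOn ℝ Set.univ f) (L : ℝ)
    (hL : ∀ y z : EuclideanSpace ℝ (Fin n), |f y - f z| ≤ L * ‖y - z‖)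
    (t δ : ℝ) (ht : 0 < t) (hδ : 0 < δ) (x : EuclideanSpace ℝ (Fin n))
    (q : EuclideanSpace ℝ (Fin n) → ℝ)
    (hq : q = fun z => (2 * π * (t * δ)) ^ (-(n : ℝ) / 2) *
      Real.exp (-‖z - x‖ ^ 2 / (2 * (t * δ)))) :
    (∫ z, Real.exp (-f z / δ) ^ 2 * q z) / (∫ z, Real.exp (-f z / δ) * q z) ^ 2
      ≤ Real.exp (2 * L ^ 2 * t / δ) := by
  have hq_pdf : q = isotropicGaussianPDFReal x (t * δ) := by
    rw [hq]; ext z; rw [isotropicGaussianPDFReal, finrank_euclideanSpace_fin]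
  rw [hq_pdf]
  exact (importance_weight_ratio_bound_general hL ht hδ x).trans
    (by gcongr; nlinarith [sq_nonneg L])
end
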